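/- arXiv:2409.05619 — 2 statements merged into one kernel-verified Lean document; each statement's English description precedes it below -/
import Mathlib

section
/- Suppose the family {ρ_{x,s}} satisfies Assumption A. For every n≥1 and every R̂>0 there exists a matrix T_n on (ℂ^𝒳)^{⊗n}⊗H_B^{⊗n} with 0⪯T_n⪯I such that, for every probability distribution P on 𝒳, every t∈(0,1), every ε>0, and every finite 𝒮_ε ⊆ 𝒮 witnessing Assumption A at ε (i.e. such that for every s∈𝒮 there is s̄∈𝒮_ε with ρ_{x,s} ⪯ (1+ε)ρ_{x,s̄} for all x∈𝒳): (i) for all s^n∈𝒮^n, Tr[(I−T_n)ρ^{XB}_{P,s^n}] ≤ (n+1)^{|𝒮_ε|−1 + t|𝒳|(d_B−1)d_B/2 + (d_B−1)|𝒳|t} · (1+ε)^n · 2^{n·t·(R̂ − min_Q I_{1−t}[X;B]_{P,Q})}, the minimum over probability distributions Q supported on 𝒮_ε; and (ii) for every density matrix σ on H_B^{⊗n}, Tr[T_n(ρ_P^{⊗n}⊗σ)] ≤ n^{d_B(d_B−1)/2}·Λ(n,d_B)·2^{−n·R̂}. -/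
open scoped ComplexOrder

noncomputable section

/-- A density matrix: positive semidefinite with unit trace. -/
def IsDensity {m : Type*} [Fintype m] (ρ : Matrix m m ℂ) : Prop :=
  ρ.PosSemidef ∧ ρ.trace = 1

/-- Functional calculus for Hermitian matrices (junk value `0` on non-Hermitian input). -/
def matFun {m : Type*} [Fintype m] [DecidableEq m] (f : ℝ → ℝ) (A : Matrix m m ℂ) :
    Matrix m m ℂ :=
  if hA : A.IsHermitian then
    (hA.eigenvectorUnitary : Matrix m m ℂ) *
        Matrix.diagonal (fun i => (f (hA.eigenvalues i) : ℂ)) *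
      star (hA.eigenvectorUnitary : Matrix m m ℂ)
  else 0

/-- Matrix power, taken on the support (`0^p := 0` on the kernel). -/
def mpow {m : Type*} [Fintype m] [DecidableEq m] (A : Matrix m m ℂ) (p : ℝ) :
    Matrix m m ℂ :=
  matFun (fun u => if u ≤ 0 then 0 else u ^ p) A

/-- The classical–quantum state `Σ_x w(x) |x⟩⟨x| ⊗ ρ_x`. -/
def cqState {X B : Type*} [DecidableEq X] (w : X → ℝ) (ρ : X → Matrix B B ℂ) :
    Matrix (X × B) (X × B) ℂ :=
  Matrix.of fun p q => (if p.1 = q.1 then ((w p.1 : ℝ) : ℂ) else 0) * ρ p.1 p.2 q.2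

/-- Tensor product of a finite family of matrices, realized on functions. -/
def tensorFam {k d : Type*} [Fintype k] (ρ : k → Matrix d d ℂ) :
    Matrix (k → d) (k → d) ℂ :=
  Matrix.of fun i j => ∏ a, ρ a (i a) (j a)

/-- `Λ(n,d)`: the number of partitions of `n` into at most `d` parts. -/
def numPartLe (n d : ℕ) : ℕ := Nat.card {p : Nat.Partition n // p.parts.card ≤ d}

/-- The Rényi-type quantity `I_{1−t}[X;B]_{P,Q}`, given the mixed states `ρQ x`. -/
def renyiI {𝒳 : Type*} [Fintype 𝒳] {d : ℕ} (P : 𝒳 → ℝ)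
    (ρQ : 𝒳 → Matrix (Fin d) (Fin d) ℂ) (t : ℝ) : ℝ :=
  -((1 - t) / t) * Real.logb 2
    (Matrix.trace (mpow (∑ x, P x • mpow (ρQ x) (1 - t)) (1 / (1 - t)))).re

/-- Probability distributions on a finite set `𝒮`. -/
abbrev ProbVec (𝒮 : Type*) [Fintype 𝒮] : Type _ :=
  {Q : 𝒮 → ℝ // (∀ s, 0 ≤ Q s) ∧ ∑ s, Q s = 1}

/-- Loewner order `A ⪯ B`. -/
def Loewner {m : Type*} [Fintype m] (A B : Matrix m m ℂ) : Prop :=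
  (B - A).PosSemidef

/-- Assumption A. -/
def AssumptionA {𝒳 𝒮 : Type*} {d : ℕ} (ρ : 𝒳 → 𝒮 → Matrix (Fin d) (Fin d) ℂ) : Prop :=
  ∀ ε : ℝ, 0 < ε → ∃ Sε : Finset 𝒮, ∀ s : 𝒮, ∃ s' ∈ Sε, ∀ x : 𝒳,
    Loewner (ρ x s) ((1 + ε) • ρ x s')

/-!
For a word `x` in `𝒳ⁿ`, the matrices invariant under the permutations of the tensor factors that
fix `x` form a star algebra acting faithfully on a left ideal of polynomial dimension: its elements
fixed by right multiplication with tensor powers of unipotent matrices. The frame operator `σₓ` of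
an orthonormal basis of this ideal commutes with the algebra, dominates each of its states, and has
trace equal to that dimension. The same construction without colours gives `τ`, which dominates
every permutation-invariant state.

The test `σₓ (σₓ + c τ)⁻¹` compares these two universal operators. Its type II error is at most
`Tr σₓ / c`. Since `σₓ` dominates `ω_{x₁} ⊗ ⋯ ⊗ ω_{xₙ}` and commutes with it, the type I error is at
most `cᵗ Tr [τᵗ (ω_{x₁} ⊗ ⋯ ⊗ ω_{xₙ})^{1-t}]`, and averaging over `x` the Hölder inequality produces
the Rényi information.

Averaging the test over permutations replaces an arbitrary output state by a permutation-invariant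
one, and a state word `sⁿ` by a uniformly random rearrangement of it. The latter is dominated, up to
the number `(n + 1)^(|𝒮| - 1)` of types, by the i.i.d. word with the empirical distribution of `sⁿ`.
-/

section LinearAlgebra

open Matrix Polynomial
open scoped MatrixOrder

variable {m : Type*} [Fintype m]

/-- The real part of the trace, as a real linear functional. -/
def reTrace : Matrix m m ℂ →ₗ[ℝ] ℝ :=
  Complex.reLm ∘ₗ traceLinearMap m ℝ ℂ

lemma reTrace_apply (A : Matrix m m ℂ) : reTrace A = A.trace.re := rfl

lemma reTrace_mul_comm (A B : Matrix m m ℂ) : reTrace (A * B) = reTrace (B * A) := by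
  rw [reTrace_apply, trace_mul_comm, reTrace_apply]

lemma reTrace_nonneg {A : Matrix m m ℂ} (hA : 0 ≤ A) : 0 ≤ reTrace A :=
  (Complex.le_def.mp (nonneg_iff_posSemidef.mp hA).trace_nonneg).1

lemma reTrace_mul_nonneg {A B : Matrix m m ℂ} (hA : 0 ≤ A) (hB : 0 ≤ B) :
    0 ≤ reTrace (A * B) := by
  classical
  obtain ⟨C, rfl⟩ := CStarAlgebra.nonneg_iff_eq_star_mul_self.mp hA
  rw [mul_assoc, reTrace_mul_comm]
  exact reTrace_nonneg (star_right_conjugate_nonneg hB C)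

lemma reTrace_mul_le_mul_left {A B C : Matrix m m ℂ} (hA : 0 ≤ A) (hBC : B ≤ C) :
    reTrace (A * B) ≤ reTrace (A * C) := by
  have := reTrace_mul_nonneg hA (sub_nonneg.mpr hBC)
  rwa [mul_sub, map_sub, sub_nonneg] at this

lemma reTrace_mul_le_mul_right {A B C : Matrix m m ℂ} (hA : 0 ≤ A) (hBC : B ≤ C) :
    reTrace (B * A) ≤ reTrace (C * A) := by
  simpa only [reTrace_mul_comm] using reTrace_mul_le_mul_left hA hBC

lemma IsDensity.nonneg {A : Matrix m m ℂ} (hA : IsDensity A) : 0 ≤ A :=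
  nonneg_iff_posSemidef.mpr hA.1

lemma IsDensity.reTrace_eq_one {A : Matrix m m ℂ} (hA : IsDensity A) : reTrace A = 1 := by
  rw [reTrace_apply, hA.2, Complex.one_re]

lemma exists_joint_eigenbasis {E : Type*} [NormedAddCommGroup E] [InnerProductSpace ℂ E]
    [FiniteDimensional ℂ E] {S T : E →ₗ[ℂ] E} (hS : S.IsSymmetric) (hT : T.IsSymmetric)
    (hST : Commute S T) (hm : Module.finrank ℂ E = Fintype.card m) :
    ∃ v : OrthonormalBasis m ℂ E,
      ∀ k, (∃ c : ℂ, S (v k) = c • v k) ∧ ∃ c : ℂ, T (v k) = c • v k := by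
  classical
  let V (i : ℂ × ℂ) : Submodule ℂ E := Module.End.eigenspace S i.2 ⊓ Module.End.eigenspace T i.1
  have hV : DirectSum.IsInternal V := hS.directSum_isInternal_of_commute hT hST
  have : Finite {i // V i ≠ ⊥} := WellFoundedGT.finite_ne_bot_of_iSupIndep hV.submodule_iSupIndep
  have := Fintype.ofFinite {i // V i ≠ ⊥}
  have hV' : DirectSum.IsInternal fun i : {i // V i ≠ ⊥} => V i :=
    DirectSum.isInternal_ne_bot_iff.mpr hV
  have horth : OrthogonalFamily ℂ (fun i : {i // V i ≠ ⊥} => V i) fun i => (V i).subtypeₗᵢ :=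
    (hS.orthogonalFamily_eigenspace_inf_eigenspace hT).comp Subtype.val_injective
  refine ⟨(hV'.subordinateOrthonormalBasis hm horth).reindex (Fintype.equivFin m).symm, fun k => ?_⟩
  have hk := hV'.subordinateOrthonormalBasis_subordinate hm (Fintype.equivFin m k) horth
  rw [Submodule.mem_inf, Module.End.mem_eigenspace_iff, Module.End.mem_eigenspace_iff] at hk
  simp only [OrthonormalBasis.reindex_apply, Equiv.symm_symm]
  exact ⟨⟨_, hk.1⟩, ⟨_, hk.2⟩⟩

variable [DecidableEq m]

/-- The algebra homomorphism `a ↦ U diag(a) U*`: the Hermitian matrices that are diagonal in the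
orthonormal basis given by the columns of `U`. -/
def diagConj (U : unitaryGroup m ℂ) : (m → ℝ) →ₐ[ℝ] Matrix m m ℂ :=
  (Unitary.conjStarAlgAut ℝ (Matrix m m ℂ) U : Matrix m m ℂ →ₐ[ℝ] Matrix m m ℂ).comp
    ((diagonalAlgHom ℝ).comp (Complex.ofRealAm.compLeft m))

lemma diagConj_apply (U : unitaryGroup m ℂ) (a : m → ℝ) :
    diagConj U a = (U : Matrix m m ℂ) * diagonal (fun i => (a i : ℂ)) * (U : Matrix m m ℂ)ᴴ := rfl

lemma diagConj_nonneg_iff {U : unitaryGroup m ℂ} {a : m → ℝ} : 0 ≤ diagConj U a ↔ 0 ≤ a := by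
  rw [nonneg_iff_posSemidef, diagConj_apply, ← star_eq_conjTranspose,
    IsUnit.posSemidef_star_right_conjugate_iff (Unitary.isUnit_coe), posSemidef_diagonal_iff]
  simp [Pi.le_def]

lemma diagConj_le_iff {U : unitaryGroup m ℂ} {a b : m → ℝ} :
    diagConj U a ≤ diagConj U b ↔ a ≤ b := by
  rw [← sub_nonneg, ← map_sub, diagConj_nonneg_iff, sub_nonneg]

lemma posDef_diagConj_iff {U : unitaryGroup m ℂ} {a : m → ℝ} :
    (diagConj U a).PosDef ↔ ∀ i, 0 < a i := by
  rw [diagConj_apply, ← star_eq_conjTranspose,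
    IsUnit.posDef_star_right_conjugate_iff (Unitary.isUnit_coe), posDef_diagonal_iff]
  simp

lemma reTrace_diagConj (U : unitaryGroup m ℂ) (a : m → ℝ) : reTrace (diagConj U a) = ∑ i, a i := by
  rw [reTrace_apply, diagConj_apply, trace_mul_comm, ← mul_assoc, ← star_eq_conjTranspose,
    Unitary.coe_star_mul_self, one_mul, trace_diagonal]
  simp

lemma isHermitian_diagConj (U : unitaryGroup m ℂ) (a : m → ℝ) : (diagConj U a).IsHermitian :=
  isHermitian_mul_mul_conjTranspose _
    (isHermitian_diagonal_of_self_adjoint _ (by ext i; simp))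

lemma spectrum_diagConj_subset (U : unitaryGroup m ℂ) (a : m → ℝ) :
    spectrum ℝ (diagConj U a) ⊆ Set.range a := by
  refine (AlgHom.spectrum_apply_subset _ a).trans fun r hr => ?_
  rw [Pi.spectrum_eq] at hr
  obtain ⟨i, hi⟩ := Set.mem_iUnion.mp hr
  exact ⟨i, ((spectrum.scalar_eq (a i)).subset hi).symm⟩

lemma matFun_eq_cfc (f : ℝ → ℝ) (A : Matrix m m ℂ) : matFun f A = cfc f A := by
  by_cases hA : A.IsHermitian
  · rw [hA.cfc_eq, matFun, dif_pos hA]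
    rfl
  · rw [matFun, dif_neg hA, cfc_apply_of_not_predicate (p := IsSelfAdjoint) A hA]

lemma exists_polynomial_eqOn_of_finite {s : Set ℝ} (hs : s.Finite) (f : ℝ → ℝ) :
    ∃ p : ℝ[X], s.EqOn f p.eval := by
  refine ⟨Lagrange.interpolate hs.toFinset id f, fun x hx => ?_⟩
  exact (Lagrange.eval_interpolate_at_node f Function.injective_id.injOn
    (hs.mem_toFinset.mpr hx)).symm

lemma exists_cfc_eq_aeval {A : Matrix m m ℂ} (hA : A.IsHermitian) (f : ℝ → ℝ) :
    ∃ p : ℝ[X], cfc f A = aeval A p := by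
  obtain ⟨p, hp⟩ := exists_polynomial_eqOn_of_finite (finite_real_spectrum (A := A)) f
  exact ⟨p, by rw [cfc_congr hp, cfc_polynomial p A hA.isSelfAdjoint]⟩

lemma cfc_diagConj (f : ℝ → ℝ) (U : unitaryGroup m ℂ) (a : m → ℝ) :
    cfc f (diagConj U a) = diagConj U (f ∘ a) := by
  obtain ⟨p, hp⟩ := exists_polynomial_eqOn_of_finite (Set.finite_range a) f
  have hfa : aeval a p = f ∘ a := by
    ext i
    rw [Function.comp_apply, hp (Set.mem_range_self i)]
    exact aeval_pi_apply₂ a p i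
  rw [cfc_congr (hp.mono (spectrum_diagConj_subset U a)),
    cfc_polynomial p _ (isHermitian_diagConj U a).isSelfAdjoint, aeval_algHom_apply, hfa]

lemma mpow_diagConj (U : unitaryGroup m ℂ) {a : m → ℝ} (ha : 0 ≤ a) {p : ℝ} (hp : p ≠ 0) :
    mpow (diagConj U a) p = diagConj U (fun i => a i ^ p) := by
  rw [mpow, matFun_eq_cfc, cfc_diagConj]
  congr 1 with i
  obtain hi | hi : a i = 0 ∨ 0 < a i := (ha i).eq_or_lt'
  · simp [hi, hp]
  · simp [not_le.mpr hi]

lemma exists_eq_diagConj {A : Matrix m m ℂ} (hA : 0 ≤ A) :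
    ∃ (U : unitaryGroup m ℂ) (a : m → ℝ), 0 ≤ a ∧ A = diagConj U a := by
  have hA' := nonneg_iff_posSemidef.mp hA
  exact ⟨_, _, hA'.eigenvalues_nonneg, hA'.isHermitian.spectral_theorem⟩

lemma mpow_nonneg {A : Matrix m m ℂ} (hA : 0 ≤ A) {p : ℝ} (hp : p ≠ 0) : 0 ≤ mpow A p := by
  obtain ⟨U, a, ha, rfl⟩ := exists_eq_diagConj hA
  rw [mpow_diagConj U ha hp, diagConj_nonneg_iff]
  exact fun i => Real.rpow_nonneg (ha i) p

lemma le_reTrace_smul_one {A : Matrix m m ℂ} (hA : 0 ≤ A) : A ≤ reTrace A • 1 := by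
  obtain ⟨U, a, ha, rfl⟩ := exists_eq_diagConj hA
  rw [reTrace_diagConj, ← map_one (diagConj U), ← map_smul, diagConj_le_iff]
  intro i
  simpa using Finset.single_le_sum (fun j _ => ha j) (Finset.mem_univ i)

lemma exists_eq_diagConj_of_eigenbasis {A : Matrix m m ℂ} (hA : A.IsHermitian)
    (v : OrthonormalBasis m ℂ (EuclideanSpace ℂ m))
    (hv : ∀ k, ∃ c : ℂ, toEuclideanLin A (v k) = c • v k) :
    ∃ a, A =
      diagConj ⟨_, (EuclideanSpace.basisFun m ℂ).toMatrix_orthonormalBasis_mem_unitary v⟩ a := by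
  have hreal (k : m) : ∃ r : ℝ, toEuclideanLin A (v k) = (r : ℂ) • v k := by
    obtain ⟨c, hc⟩ := hv k
    have hc' := (isSymmetric_toEuclideanLin_iff.mpr hA).conj_eigenvalue_eq_self
      (Module.End.hasEigenvalue_of_hasEigenvector
        ⟨Module.End.mem_eigenspace_iff.mpr hc, v.orthonormal.ne_zero k⟩)
    exact ⟨c.re, by rw [hc, Complex.conj_eq_iff_re.mp hc']⟩
  choose a ha using hreal
  refine ⟨a, ?_⟩
  set U : unitaryGroup m ℂ :=
    ⟨_, (EuclideanSpace.basisFun m ℂ).toMatrix_orthonormalBasis_mem_unitary v⟩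
  have hAU : A * (U : Matrix m m ℂ) = (U : Matrix m m ℂ) * diagonal (fun k => (a k : ℂ)) := by
    ext r k
    have hrk := congrArg (fun w : EuclideanSpace ℂ m => w r) (ha k)
    rw [mul_diagonal]
    simpa [U, mul_apply, mulVec, dotProduct, Module.Basis.toMatrix_apply, toLpLin_apply, mul_comm]
      using hrk
  rw [diagConj_apply, ← hAU, mul_assoc, ← star_eq_conjTranspose, ← Unitary.coe_star,
    Unitary.coe_mul_star_self, mul_one]

lemma exists_eq_diagConj_pair {A B : Matrix m m ℂ} (hA : 0 ≤ A) (hB : 0 ≤ B) (hAB : Commute A B) :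
    ∃ (U : unitaryGroup m ℂ) (a b : m → ℝ),
      0 ≤ a ∧ 0 ≤ b ∧ A = diagConj U a ∧ B = diagConj U b := by
  have hA' := (nonneg_iff_posSemidef.mp hA).isHermitian
  have hB' := (nonneg_iff_posSemidef.mp hB).isHermitian
  have hcomm : Commute (toEuclideanLin A) (toEuclideanLin B) := by
    refine LinearMap.ext fun v => ?_
    simp [toLpLin_apply, hAB.eq]
  obtain ⟨v, hv⟩ := exists_joint_eigenbasis (m := m) (isSymmetric_toEuclideanLin_iff.mpr hA')
    (isSymmetric_toEuclideanLin_iff.mpr hB') hcomm (by simp)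
  obtain ⟨a, rfl⟩ := exists_eq_diagConj_of_eigenbasis hA' v fun k => (hv k).1
  obtain ⟨b, rfl⟩ := exists_eq_diagConj_of_eigenbasis hB' v fun k => (hv k).2
  exact ⟨_, a, b, diagConj_nonneg_iff.mp hA, diagConj_nonneg_iff.mp hB, rfl, rfl⟩

end LinearAlgebra

section TraceInequalities

open Matrix
open scoped MatrixOrder

lemma sum_rpow_mul_rpow_le {ι : Type*} (s : Finset ι) {f g : ι → ℝ} (hf : ∀ i ∈ s, 0 ≤ f i)
    (hg : ∀ i ∈ s, 0 ≤ g i) {t : ℝ} (ht : t ∈ Set.Ioo (0 : ℝ) 1) :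
    ∑ i ∈ s, f i ^ t * g i ^ (1 - t) ≤ (∑ i ∈ s, f i) ^ t * (∑ i ∈ s, g i) ^ (1 - t) := by
  have ht' : 0 < 1 - t := sub_pos.mpr ht.2
  have hconj : (1 / t).HolderConjugate (1 / (1 - t)) :=
    Real.holderConjugate_iff.mpr ⟨one_lt_one_div ht.1 ht.2, by simp⟩
  have hpow {u p : ℝ} (hu : 0 ≤ u) (hp : 0 < p) : (u ^ p) ^ (1 / p) = u := by
    rw [one_div, Real.rpow_rpow_inv hu hp.ne']
  calc ∑ i ∈ s, f i ^ t * g i ^ (1 - t)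
      ≤ (∑ i ∈ s, (f i ^ t) ^ (1 / t)) ^ (1 / (1 / t)) *
          (∑ i ∈ s, (g i ^ (1 - t)) ^ (1 / (1 - t))) ^ (1 / (1 / (1 - t))) :=
        Real.inner_le_Lp_mul_Lq_of_nonneg s hconj (fun i hi => Real.rpow_nonneg (hf i hi) t)
          (fun i hi => Real.rpow_nonneg (hg i hi) _)
    _ = (∑ i ∈ s, f i) ^ t * (∑ i ∈ s, g i) ^ (1 - t) := by
        rw [one_div_one_div, one_div_one_div,
          Finset.sum_congr rfl fun i hi => hpow (hf i hi) ht.1,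
          Finset.sum_congr rfl fun i hi => hpow (hg i hi) ht']

variable {m : Type*} [Fintype m] [DecidableEq m]

lemma sum_mul_rpow_mul_le_of_doublyStochastic {W : Matrix m m ℝ} (hW : W ∈ doublyStochastic ℝ m)
    {a b : m → ℝ} (ha : 0 ≤ a) (hb : 0 ≤ b) {t : ℝ} (ht : t ∈ Set.Ioo (0 : ℝ) 1) :
    ∑ i, ∑ j, W i j * (a i ^ t * b j) ≤ (∑ i, a i) ^ t * (∑ j, b j ^ (1 / (1 - t))) ^ (1 - t) := by
  have ht' : 0 < 1 - t := sub_pos.mpr ht.2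
  have hW0 (i j : m) : 0 ≤ W i j := nonneg_of_mem_doublyStochastic hW
  have hb' (j : m) : 0 ≤ b j ^ (1 / (1 - t)) := Real.rpow_nonneg (hb j) _
  have hterm (i j : m) : W i j * (a i ^ t * b j) =
      (W i j * a i) ^ t * (W i j * b j ^ (1 / (1 - t))) ^ (1 - t) := by
    rw [Real.mul_rpow (hW0 i j) (ha i), Real.mul_rpow (hW0 i j) (hb' j), one_div,
      Real.rpow_inv_rpow (hb j) ht'.ne', mul_mul_mul_comm,
      ← Real.rpow_add_of_nonneg (hW0 i j) ht.1.le ht'.le, add_sub_cancel, Real.rpow_one]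
  calc ∑ i, ∑ j, W i j * (a i ^ t * b j)
      = ∑ q : m × m, (W q.1 q.2 * a q.1) ^ t * (W q.1 q.2 * b q.2 ^ (1 / (1 - t))) ^ (1 - t) := by
        simp only [hterm, Fintype.sum_prod_type]
    _ ≤ (∑ q : m × m, W q.1 q.2 * a q.1) ^ t *
          (∑ q : m × m, W q.1 q.2 * b q.2 ^ (1 / (1 - t))) ^ (1 - t) :=
        sum_rpow_mul_rpow_le _ (fun q _ => mul_nonneg (hW0 _ _) (ha _))
          (fun q _ => mul_nonneg (hW0 _ _) (hb' _)) ht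
    _ = (∑ i, a i) ^ t * (∑ j, b j ^ (1 / (1 - t))) ^ (1 - t) := by
        congr 2
        · simp_rw [Fintype.sum_prod_type, ← Finset.sum_mul, sum_row_of_mem_doublyStochastic hW,
            one_mul]
        · simp_rw [Fintype.sum_prod_type_right, ← Finset.sum_mul,
            sum_col_of_mem_doublyStochastic hW, one_mul]

lemma sum_norm_sq_row_eq_one (U : unitaryGroup m ℂ) (i : m) :
    ∑ j, ‖(U : Matrix m m ℂ) i j‖ ^ 2 = 1 := by
  have hi := congrFun (congrFun (mem_unitaryGroup_iff.mp U.2) i) i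
  simp only [mul_apply, star_apply, RCLike.star_def, Complex.mul_conj', one_apply_eq] at hi
  exact_mod_cast hi

lemma norm_sq_mem_doublyStochastic (U : unitaryGroup m ℂ) :
    (of fun i j => ‖(U : Matrix m m ℂ) i j‖ ^ 2) ∈ doublyStochastic ℝ m := by
  refine mem_doublyStochastic_iff_sum.mpr
    ⟨fun i j => sq_nonneg _, sum_norm_sq_row_eq_one U, fun j => ?_⟩
  simpa using sum_norm_sq_row_eq_one (star U) j

lemma reTrace_diagConj_mul_diagConj (U V : unitaryGroup m ℂ) (a b : m → ℝ) :
    reTrace (diagConj U a * diagConj V b) =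
      ∑ i, ∑ j, ‖((star U * V : unitaryGroup m ℂ) : Matrix m m ℂ) i j‖ ^ 2 * (a i * b j) := by
  set W : Matrix m m ℂ := ((star U * V : unitaryGroup m ℂ) : Matrix m m ℂ)
  have hcycle : reTrace (diagConj U a * diagConj V b) =
      reTrace (diagonal (fun i => (a i : ℂ)) * W * (diagonal (fun j => (b j : ℂ)) * Wᴴ)) := by
    simp only [W, diagConj_apply, Submonoid.coe_mul, Unitary.coe_star, star_eq_conjTranspose,
      conjTranspose_mul, conjTranspose_conjTranspose, mul_assoc]
    rw [reTrace_mul_comm]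
    simp only [mul_assoc]
  rw [hcycle]
  simp only [reTrace_apply, trace, diag, mul_apply (N := _ * Wᴴ), diagonal_mul, Complex.re_sum,
    conjTranspose_apply]
  refine Finset.sum_congr rfl fun i _ => Finset.sum_congr rfl fun j _ => ?_
  rw [mul_mul_mul_comm, RCLike.star_def, Complex.mul_conj', ← Complex.ofReal_mul,
    ← Complex.ofReal_pow, ← Complex.ofReal_mul, Complex.ofReal_re, mul_comm]

lemma reTrace_mpow_mul_le {A B : Matrix m m ℂ} (hA : 0 ≤ A) (hB : 0 ≤ B) {t : ℝ}
    (ht : t ∈ Set.Ioo (0 : ℝ) 1) :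
    reTrace (mpow A t * B) ≤ reTrace A ^ t * reTrace (mpow B (1 / (1 - t))) ^ (1 - t) := by
  obtain ⟨U, a, ha, rfl⟩ := exists_eq_diagConj hA
  obtain ⟨V, b, hb, rfl⟩ := exists_eq_diagConj hB
  have ht' : 1 / (1 - t) ≠ 0 := (one_div_pos.mpr (sub_pos.mpr ht.2)).ne'
  rw [mpow_diagConj U ha ht.1.ne', mpow_diagConj V hb ht', reTrace_diagConj_mul_diagConj,
    reTrace_diagConj, reTrace_diagConj]
  exact sum_mul_rpow_mul_le_of_doublyStochastic (norm_sq_mem_doublyStochastic (star U * V)) ha hb ht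

lemma div_one_add_le_rpow {u t : ℝ} (hu : 0 ≤ u) (ht : t ∈ Set.Ioo (0 : ℝ) 1) :
    u / (1 + u) ≤ u ^ t := by
  rcases le_total u 1 with h | h
  · calc u / (1 + u) ≤ u := div_le_self hu (by linarith)
      _ ≤ u ^ t := Real.self_le_rpow_of_le_one hu h ht.2.le
  · calc u / (1 + u) ≤ 1 := div_le_one_of_le₀ (by linarith) (by linarith)
      _ ≤ u ^ t := Real.one_le_rpow h ht.1.le

lemma mpow_neg_mul_self_le {S D : Matrix m m ℂ} (hD : 0 ≤ D) (hDS : D ≤ S) (hSD : Commute S D)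
    {t : ℝ} (ht : t ∈ Set.Ioo (0 : ℝ) 1) : mpow S (-t) * D ≤ mpow D (1 - t) := by
  obtain ⟨U, s, r, hs, hr, rfl, rfl⟩ := exists_eq_diagConj_pair (hD.trans hDS) hD hSD
  rw [mpow_diagConj U hs (neg_ne_zero.mpr ht.1.ne'), mpow_diagConj U hr (sub_pos.mpr ht.2).ne',
    ← map_mul, diagConj_le_iff]
  intro i
  have hrs : r i ≤ s i := diagConj_le_iff.mp hDS i
  obtain hi | hi : r i = 0 ∨ 0 < r i := (hr i).eq_or_lt'
  · simpa [hi] using Real.rpow_nonneg le_rfl _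
  · calc s i ^ (-t) * r i ≤ r i ^ (-t) * r i :=
          mul_le_mul_of_nonneg_right (Real.rpow_le_rpow_of_nonpos hi hrs (neg_nonpos.mpr ht.1.le))
            hi.le
      _ = r i ^ (1 - t) := by rw [← Real.rpow_add_one hi.ne', neg_add_eq_sub]

/-- The test `S (S + c R)⁻¹` deciding between commuting operators `S` and `R`. -/
def likelihoodTest (c : ℝ) (S R : Matrix m m ℂ) : Matrix m m ℂ := S * (S + c • R)⁻¹

lemma inv_diagConj (U : unitaryGroup m ℂ) {a : m → ℝ} (ha : ∀ i, a i ≠ 0) :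
    (diagConj U a)⁻¹ = diagConj U a⁻¹ := by
  refine inv_eq_right_inv ?_
  rw [← map_mul, ← map_one (diagConj U)]
  congr 1 with i
  simp [ha i]

lemma likelihoodTest_diagConj {c : ℝ} (hc : 0 ≤ c) (U : unitaryGroup m ℂ) {s r : m → ℝ}
    (hs : ∀ i, 0 < s i) (hr : 0 ≤ r) :
    likelihoodTest c (diagConj U s) (diagConj U r) =
      diagConj U fun i => s i / (s i + c * r i) := by
  rw [likelihoodTest, ← map_smul, ← map_add, inv_diagConj, ← map_mul]
  · rfl
  · exact fun i => (add_pos_of_pos_of_nonneg (hs i) (mul_nonneg hc (hr i))).ne'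

variable {S R D : Matrix m m ℂ} {c t : ℝ}

lemma likelihoodTest_nonneg (hS : S.PosDef) (hR : 0 ≤ R) (hSR : Commute S R) (hc : 0 ≤ c) :
    0 ≤ likelihoodTest c S R := by
  obtain ⟨U, s, r, -, hr, rfl, rfl⟩ := exists_eq_diagConj_pair hS.posSemidef.nonneg hR hSR
  have hs := posDef_diagConj_iff.mp hS
  rw [likelihoodTest_diagConj hc U hs hr, diagConj_nonneg_iff]
  exact fun i => div_nonneg (hs i).le (add_nonneg (hs i).le (mul_nonneg hc (hr i)))

lemma likelihoodTest_le_one (hS : S.PosDef) (hR : 0 ≤ R) (hSR : Commute S R) (hc : 0 ≤ c) :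
    likelihoodTest c S R ≤ 1 := by
  obtain ⟨U, s, r, -, hr, rfl, rfl⟩ := exists_eq_diagConj_pair hS.posSemidef.nonneg hR hSR
  have hs := posDef_diagConj_iff.mp hS
  rw [likelihoodTest_diagConj hc U hs hr, ← map_one (diagConj U), diagConj_le_iff]
  exact fun i => div_le_one_of_le₀ (le_add_of_nonneg_right (mul_nonneg hc (hr i)))
    (add_nonneg (hs i).le (mul_nonneg hc (hr i)))

lemma reTrace_likelihoodTest_mul_le (hS : S.PosDef) (hR : 0 ≤ R) (hSR : Commute S R)
    (hc : 0 < c) : reTrace (likelihoodTest c S R * R) ≤ reTrace S / c := by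
  obtain ⟨U, s, r, -, hr, rfl, rfl⟩ := exists_eq_diagConj_pair hS.posSemidef.nonneg hR hSR
  have hs := posDef_diagConj_iff.mp hS
  rw [likelihoodTest_diagConj hc.le U hs hr, ← map_mul, reTrace_diagConj, reTrace_diagConj,
    Finset.sum_div]
  refine Finset.sum_le_sum fun i _ => ?_
  rw [Pi.mul_apply, div_mul_eq_mul_div,
    div_le_div_iff₀ (add_pos_of_pos_of_nonneg (hs i) (mul_nonneg hc.le (hr i))) hc]
  nlinarith [sq_nonneg (s i)]

lemma one_sub_likelihoodTest_le (hS : S.PosDef) (hR : 0 ≤ R) (hSR : Commute S R) (hc : 0 ≤ c)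
    (ht : t ∈ Set.Ioo (0 : ℝ) 1) :
    1 - likelihoodTest c S R ≤ c ^ t • (mpow R t * mpow S (-t)) := by
  obtain ⟨U, s, r, hs0, hr, rfl, rfl⟩ := exists_eq_diagConj_pair hS.posSemidef.nonneg hR hSR
  have hs := posDef_diagConj_iff.mp hS
  rw [likelihoodTest_diagConj hc U hs hr, mpow_diagConj U hr ht.1.ne',
    mpow_diagConj U hs0 (neg_ne_zero.mpr ht.1.ne'), ← map_one (diagConj U), ← map_sub, ← map_mul,
    ← map_smul, diagConj_le_iff]
  intro i
  have hu : 0 ≤ c * r i / s i := div_nonneg (mul_nonneg hc (hr i)) (hs i).le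
  calc 1 - s i / (s i + c * r i) = c * r i / s i / (1 + c * r i / s i) := by
        have := hs i
        have := add_pos_of_pos_of_nonneg (hs i) (mul_nonneg hc (hr i))
        field_simp
        ring
    _ ≤ (c * r i / s i) ^ t := div_one_add_le_rpow hu ht
    _ = c ^ t * (r i ^ t * s i ^ (-t)) := by
        rw [Real.div_rpow (mul_nonneg hc (hr i)) (hs i).le, Real.mul_rpow hc (hr i),
          Real.rpow_neg (hs i).le, div_eq_mul_inv, mul_assoc]

lemma reTrace_one_sub_likelihoodTest_mul_le (hS : S.PosDef) (hR : 0 ≤ R) (hSR : Commute S R)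
    (hc : 0 ≤ c) (ht : t ∈ Set.Ioo (0 : ℝ) 1) (hD : 0 ≤ D) (hDS : D ≤ S) (hSD : Commute S D) :
    reTrace ((1 - likelihoodTest c S R) * D) ≤ c ^ t * reTrace (mpow R t * mpow D (1 - t)) := by
  calc reTrace ((1 - likelihoodTest c S R) * D)
      ≤ reTrace ((c ^ t • (mpow R t * mpow S (-t))) * D) :=
        reTrace_mul_le_mul_right hD (one_sub_likelihoodTest_le hS hR hSR hc ht)
    _ = c ^ t * reTrace (mpow R t * (mpow S (-t) * D)) := by
        rw [smul_mul_assoc, map_smul, smul_eq_mul, mul_assoc]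
    _ ≤ c ^ t * reTrace (mpow R t * mpow D (1 - t)) :=
        mul_le_mul_of_nonneg_left
          (reTrace_mul_le_mul_left (mpow_nonneg hR ht.1.ne') (mpow_neg_mul_self_le hD hDS hSD ht))
          (Real.rpow_nonneg hc t)

end TraceInequalities

section UniversalOperator

open Matrix Module
open scoped MatrixOrder

variable {m : Type*} [Fintype m]

/-- A family of matrices in `J` that is an orthonormal basis of `J` for the Hilbert–Schmidt inner
product `⟪x, y⟫ = Tr (y xᴴ)`; only normalization and the expansion of elements of `J` are
recorded. -/
structure IsHilbertSchmidtBasis {ι : Type*} [Fintype ι] (J : Submodule ℂ (Matrix m m ℂ))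
    (E : ι → Matrix m m ℂ) : Prop where
  mem (k : ι) : E k ∈ J
  trace_self (k : ι) : (E k * (E k)ᴴ).trace = 1
  sum_trace_smul {s : Matrix m m ℂ} (hs : s ∈ J) : ∑ k, (s * (E k)ᴴ).trace • E k = s

/-- The frame operator `∑ₖ Eₖ Eₖᴴ` of a family of matrices. -/
def frameOperator {ι : Type*} [Fintype ι] (E : ι → Matrix m m ℂ) : Matrix m m ℂ :=
  ∑ k, E k * (E k)ᴴ

lemma exists_isHilbertSchmidtBasis (J : Submodule ℂ (Matrix m m ℂ)) :
    ∃ E : Fin (finrank ℂ J) → Matrix m m ℂ, IsHilbertSchmidtBasis J E := by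
  let core : InnerProductSpace.Core ℂ (Matrix m m ℂ) :=
    { inner x y := (y * xᴴ).trace
      conj_inner_symm x y := by
        simp only [starRingEnd_apply, ← trace_conjTranspose, conjTranspose_mul,
          conjTranspose_conjTranspose]
      re_inner_nonneg x :=
        (RCLike.nonneg_iff.mp (posSemidef_self_mul_conjTranspose x).trace_nonneg).1
      add_left := by simp [mul_add]
      smul_left := by simp
      definite x hx := trace_mul_conjTranspose_self_eq_zero_iff.mp hx }
  let := core.toNormedAddCommGroup
  let := InnerProductSpace.ofCore core.toCore
  have hinner (x y : Matrix m m ℂ) : inner ℂ x y = (y * xᴴ).trace := rfl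
  let b := stdOrthonormalBasis ℂ J
  refine ⟨fun k => (b k : Matrix m m ℂ), fun k => (b k).2, fun k => ?_, fun {s} hs => ?_⟩
  · rw [← hinner, ← Submodule.coe_inner, b.inner_eq_one]
  · simpa [hinner] using congrArg (Subtype.val) (b.sum_repr' ⟨s, hs⟩)

variable {ι : Type*} [Fintype ι] {E : ι → Matrix m m ℂ} {J : Submodule ℂ (Matrix m m ℂ)}

lemma frameOperator_nonneg (E : ι → Matrix m m ℂ) : 0 ≤ frameOperator E :=
  Finset.sum_nonneg fun k _ => mul_star_self_nonneg (E k)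

-- This is Lagrange's identity: twice the difference of the two sides is the sum of `y yᴴ` over
-- `y = c̄ₖ Eₗ - c̄ₗ Eₖ`.
lemma sum_smul_mul_conjTranspose_le (c : ι → ℂ) (E : ι → Matrix m m ℂ) :
    (∑ k, c k • E k) * (∑ k, c k • E k)ᴴ ≤ (∑ k, ‖c k‖ ^ 2) • frameOperator E := by
  let y (k l : ι) : Matrix m m ℂ := star (c k) • E l - star (c l) • E k
  have hy (k l : ι) : y k l * (y k l)ᴴ =
      ((‖c k‖ ^ 2 • (E l * (E l)ᴴ) + ‖c l‖ ^ 2 • (E k * (E k)ᴴ)) -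
        (c l • E l) * (c k • E k)ᴴ) - (c k • E k) * (c l • E l)ᴴ := by
    have hnorm (j : ι) : c j * star (c j) = ((‖c j‖ ^ 2 : ℝ) : ℂ) := by
      rw [RCLike.star_def, Complex.mul_conj']
      norm_cast
    simp only [y, conjTranspose_sub, conjTranspose_smul, star_star, sub_mul, mul_sub,
      smul_mul_assoc, mul_smul_comm, smul_smul, ← Complex.coe_smul, ← hnorm]
    module
  have hsum : ∑ k, ∑ l, y k l * (y k l)ᴴ = (2 : ℝ) • ((∑ k, ‖c k‖ ^ 2) • frameOperator E -
      (∑ k, c k • E k) * (∑ k, c k • E k)ᴴ) := by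
    have hcross : (∑ k, c k • E k) * (∑ k, c k • E k)ᴴ =
        ∑ k, ∑ l, (c k • E k) * (c l • E l)ᴴ := by
      rw [conjTranspose_sum, Finset.sum_mul_sum]
    have hdiag : (∑ k, ‖c k‖ ^ 2) • frameOperator E =
        ∑ k, ∑ l, ‖c k‖ ^ 2 • (E l * (E l)ᴴ) := by
      simp_rw [frameOperator, Finset.sum_smul, Finset.smul_sum]
    simp only [hy, Finset.sum_sub_distrib, Finset.sum_add_distrib]
    rw [Finset.sum_comm (f := fun k l => ‖c l‖ ^ 2 • (E k * (E k)ᴴ)),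
      Finset.sum_comm (f := fun k l => (c l • E l) * (c k • E k)ᴴ), hcross, hdiag]
    module
  have hpos : 0 ≤ ∑ k, ∑ l, y k l * (y k l)ᴴ :=
    Finset.sum_nonneg fun k _ => Finset.sum_nonneg fun l _ => mul_star_self_nonneg (y k l)
  rw [hsum, smul_nonneg_iff_nonneg_of_pos_left two_pos] at hpos
  exact sub_nonneg.mp hpos

namespace IsHilbertSchmidtBasis

lemma sum_norm_sq_trace (hE : IsHilbertSchmidtBasis J E) {s : Matrix m m ℂ} (hs : s ∈ J) :
    ∑ k, ‖(s * (E k)ᴴ).trace‖ ^ 2 = reTrace (s * sᴴ) := by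
  have h (k : ι) : (s * ((s * (E k)ᴴ).trace • E k)ᴴ).trace =
      ((‖(s * (E k)ᴴ).trace‖ ^ 2 : ℝ) : ℂ) := by
    rw [conjTranspose_smul, mul_smul_comm, trace_smul, smul_eq_mul, RCLike.star_def,
      Complex.conj_mul']
    norm_cast
  calc ∑ k, ‖(s * (E k)ᴴ).trace‖ ^ 2
      = reTrace (s * (∑ k, (s * (E k)ᴴ).trace • E k)ᴴ) := by
        simp_rw [conjTranspose_sum, Finset.mul_sum, map_sum, reTrace_apply, h, Complex.ofReal_re]
    _ = reTrace (s * sᴴ) := by rw [hE.sum_trace_smul hs]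

lemma mul_conjTranspose_le (hE : IsHilbertSchmidtBasis J E) {s : Matrix m m ℂ} (hs : s ∈ J) :
    s * sᴴ ≤ reTrace (s * sᴴ) • frameOperator E := by
  have := sum_smul_mul_conjTranspose_le (fun k => (s * (E k)ᴴ).trace) E
  rwa [hE.sum_trace_smul hs, hE.sum_norm_sq_trace hs] at this

lemma reTrace_frameOperator (hE : IsHilbertSchmidtBasis J E) :
    reTrace (frameOperator E) = Fintype.card ι := by
  simp [reTrace_apply, frameOperator, hE.trace_self]

-- Left multiplication by `a` and by `aᴴ` on `J` are given by mutually adjoint matrices.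
lemma commute_frameOperator (hE : IsHilbertSchmidtBasis J E) {a : Matrix m m ℂ}
    (ha : ∀ s ∈ J, a * s ∈ J) (ha' : ∀ s ∈ J, aᴴ * s ∈ J) : Commute a (frameOperator E) := by
  have hleft (k : ι) : a * E k = ∑ l, (a * E k * (E l)ᴴ).trace • E l :=
    (hE.sum_trace_smul (ha _ (hE.mem k))).symm
  have hright (l : ι) : (E l)ᴴ * a = ∑ k, (a * E k * (E l)ᴴ).trace • (E k)ᴴ := by
    have h := congrArg conjTranspose (hE.sum_trace_smul (ha' _ (hE.mem l)))
    simp only [conjTranspose_sum, conjTranspose_smul, ← trace_conjTranspose, conjTranspose_mul,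
      conjTranspose_conjTranspose] at h
    rw [← h]
    refine Finset.sum_congr rfl fun k _ => ?_
    rw [trace_mul_cycle' (E k), mul_assoc]
  calc a * frameOperator E
      = ∑ k, ∑ l, (a * E k * (E l)ᴴ).trace • (E l * (E k)ᴴ) := by
        rw [frameOperator, Finset.mul_sum]
        refine Finset.sum_congr rfl fun k _ => ?_
        rw [← mul_assoc, hleft k, Finset.sum_mul]
        simp only [smul_mul_assoc, ← hleft]
    _ = ∑ l, ∑ k, (a * E k * (E l)ᴴ).trace • (E l * (E k)ᴴ) := Finset.sum_comm
    _ = frameOperator E * a := by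
        rw [frameOperator, Finset.sum_mul]
        refine Finset.sum_congr rfl fun l _ => ?_
        rw [mul_assoc, hright l, Finset.mul_sum]
        simp only [mul_smul_comm]

lemma eq_zero_of_mul_frameOperator_eq_zero (hE : IsHilbertSchmidtBasis J E) {a : Matrix m m ℂ}
    (ha : a * frameOperator E = 0) {s : Matrix m m ℂ} (hs : s ∈ J) : a * s = 0 := by
  have hsum : ∑ k, (a * E k) * star (a * E k) = 0 := by
    rw [← zero_mul aᴴ, ← ha, frameOperator, Finset.mul_sum, Finset.sum_mul]
    simp only [star_eq_conjTranspose, conjTranspose_mul, mul_assoc]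
  have haE (k : ι) : a * E k = 0 := by
    rw [Finset.sum_eq_zero_iff_of_nonneg fun k _ => mul_star_self_nonneg (a * E k)] at hsum
    exact self_mul_conjTranspose_eq_zero.mp (hsum k (Finset.mem_univ k))
  rw [← hE.sum_trace_smul hs, Finset.mul_sum]
  simp only [mul_smul_comm, haE, smul_zero, Finset.sum_const_zero]

end IsHilbertSchmidtBasis

variable [DecidableEq m] {M : StarSubalgebra ℂ (Matrix m m ℂ)} {A S : Matrix m m ℂ}

lemma cfc_mem_starSubalgebra (hA : A.IsHermitian) (hAM : A ∈ M) (f : ℝ → ℝ) : cfc f A ∈ M := by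
  obtain ⟨p, hp⟩ := exists_cfc_eq_aeval hA f
  rw [hp]
  exact Algebra.adjoin_le (S := M.toSubalgebra.restrictScalars ℝ) (Set.singleton_subset_iff.mpr hAM)
    (Polynomial.aeval_mem_adjoin_singleton ℝ A)

lemma mpow_mem_starSubalgebra (hA : 0 ≤ A) (hAM : A ∈ M) (p : ℝ) : mpow A p ∈ M := by
  rw [mpow, matFun_eq_cfc]
  exact cfc_mem_starSubalgebra (nonneg_iff_posSemidef.mp hA).isHermitian hAM _

-- The spectral projection onto the kernel of `S` lies in `M` and annihilates `S`.
lemma posDef_of_forall_mul_eq_zero (hS : 0 ≤ S) (hSM : S ∈ M)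
    (h : ∀ a ∈ M, a * S = 0 → a = 0) : S.PosDef := by
  obtain ⟨U, s, hs, rfl⟩ := exists_eq_diagConj hS
  let χ : ℝ → ℝ := fun u => if u = 0 then 1 else 0
  have hmem : diagConj U (χ ∘ s) ∈ M := by
    rw [← cfc_diagConj]
    exact cfc_mem_starSubalgebra (isHermitian_diagConj U s) hSM χ
  have hker : diagConj U (χ ∘ s) * diagConj U s = 0 := by
    rw [← map_mul, ← map_zero (diagConj U)]
    congr 1 with i
    simp [χ]
  have hle : χ ∘ s ≤ 0 := by
    rw [← diagConj_le_iff (U := U), map_zero, h _ hmem hker]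
  refine posDef_diagConj_iff.mpr fun i => (hs i).lt_of_ne' fun hi => ?_
  have := hle i
  norm_num [χ, hi] at this

lemma mpow_half_mul_self (hA : 0 ≤ A) : mpow A (1 / 2) * mpow A (1 / 2) = A := by
  obtain ⟨U, a, ha, rfl⟩ := exists_eq_diagConj hA
  rw [mpow_diagConj U ha (by norm_num), ← map_mul]
  congr 1 with i
  rw [Pi.mul_apply, ← Real.sqrt_eq_rpow, Real.mul_self_sqrt (ha i)]

lemma mpow_neg_half_mul_mul (hS : S.PosDef) : mpow S (-(1 / 2)) * S * mpow S (-(1 / 2)) = 1 := by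
  obtain ⟨U, s, hs0, rfl⟩ := exists_eq_diagConj hS.posSemidef.nonneg
  rw [mpow_diagConj U hs0 (by norm_num), ← map_mul, ← map_mul, ← map_one (diagConj U)]
  congr 1 with i
  have hs := posDef_diagConj_iff.mp hS i
  rw [Pi.mul_apply, Pi.mul_apply, ← Real.rpow_add_one hs.ne', ← Real.rpow_add hs]
  norm_num

-- Writing `τ = ∑ₖ sₖ sₖᴴ` with `sₖ = τ^{1/2} σ^{-1/2} Eₖ ∈ J` reduces domination to single
-- elements of `J`.
lemma IsHilbertSchmidtBasis.le_reTrace_smul_frameOperator (hE : IsHilbertSchmidtBasis J E)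
    (hJ : ∀ a ∈ M, ∀ s ∈ J, a * s ∈ J) (hpos : (frameOperator E).PosDef)
    (hmem : frameOperator E ∈ M) {τ : Matrix m m ℂ} (hτ : 0 ≤ τ) (hτM : τ ∈ M) :
    τ ≤ reTrace τ • frameOperator E := by
  set σ := frameOperator E with hσ
  set a := mpow τ (1 / 2) * mpow σ (-(1 / 2)) with ha
  have hσ0 : 0 ≤ σ := hpos.posSemidef.nonneg
  have haM : a ∈ M :=
    mul_mem (mpow_mem_starSubalgebra hτ hτM _) (mpow_mem_starSubalgebra hσ0 hmem _)
  have haσ : a * σ * aᴴ = τ := by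
    have hr := (nonneg_iff_posSemidef.mp (mpow_nonneg hτ (p := 1 / 2) (by norm_num))).isHermitian
    have hq := (nonneg_iff_posSemidef.mp (mpow_nonneg hσ0 (p := -(1 / 2))
      (by norm_num))).isHermitian
    rw [ha, conjTranspose_mul, hr.eq, hq.eq]
    calc mpow τ (1 / 2) * mpow σ (-(1 / 2)) * σ * (mpow σ (-(1 / 2)) * mpow τ (1 / 2))
        = mpow τ (1 / 2) * (mpow σ (-(1 / 2)) * σ * mpow σ (-(1 / 2))) * mpow τ (1 / 2) := by
          simp only [mul_assoc]
      _ = τ := by rw [mpow_neg_half_mul_mul hpos, mul_one, mpow_half_mul_self hτ]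
  have hsum : τ = ∑ k, (a * E k) * (a * E k)ᴴ := by
    rw [← haσ, hσ, frameOperator, Finset.mul_sum, Finset.sum_mul]
    simp only [conjTranspose_mul, mul_assoc]
  calc τ = ∑ k, (a * E k) * (a * E k)ᴴ := hsum
    _ ≤ ∑ k, reTrace ((a * E k) * (a * E k)ᴴ) • σ :=
        Finset.sum_le_sum fun k _ => hE.mul_conjTranspose_le (hJ a haM _ (hE.mem k))
    _ = reTrace τ • σ := by rw [← Finset.sum_smul, ← map_sum, ← hsum]

theorem exists_universal_operator (M : StarSubalgebra ℂ (Matrix m m ℂ))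
    (J : Submodule ℂ (Matrix m m ℂ)) (hJM : ∀ s ∈ J, s ∈ M) (hJ : ∀ a ∈ M, ∀ s ∈ J, a * s ∈ J)
    (hfaithful : ∀ a ∈ M, (∀ s ∈ J, a * s = 0) → a = 0) :
    ∃ σ ∈ M, σ.PosDef ∧ (∀ a ∈ M, Commute a σ) ∧ reTrace σ = finrank ℂ J ∧
      ∀ τ ∈ M, 0 ≤ τ → τ ≤ reTrace τ • σ := by
  obtain ⟨E, hE⟩ := exists_isHilbertSchmidtBasis J
  have hmem : frameOperator E ∈ M :=
    sum_mem fun k _ => mul_mem (hJM _ (hE.mem k)) (star_mem (hJM _ (hE.mem k)))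
  have hpos : (frameOperator E).PosDef :=
    posDef_of_forall_mul_eq_zero (frameOperator_nonneg E) hmem fun a ha h0 =>
      hfaithful a ha fun _ hs => hE.eq_zero_of_mul_frameOperator_eq_zero h0 hs
  exact ⟨frameOperator E, hmem, hpos,
    fun a ha => hE.commute_frameOperator (hJ a ha) (hJ _ (star_mem ha)),
    by rw [hE.reTrace_frameOperator, Fintype.card_fin],
    fun τ hτM hτ => hE.le_reTrace_smul_frameOperator hJ hpos hmem hτ hτM⟩

end UniversalOperator

section TensorProducts

open Matrix
open scoped MatrixOrder

variable {κ δ : Type*} [Fintype κ]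

lemma tensorFam_apply (A : κ → Matrix δ δ ℂ) (i j : κ → δ) :
    tensorFam A i j = ∏ k, A k (i k) (j k) := rfl

lemma conjTranspose_tensorFam (A : κ → Matrix δ δ ℂ) :
    (tensorFam A)ᴴ = tensorFam fun k => (A k)ᴴ := by
  ext i j
  simp [tensorFam_apply]

lemma tensorFam_smul (c : κ → ℝ) (A : κ → Matrix δ δ ℂ) :
    tensorFam (fun k => c k • A k) = (∏ k, c k) • tensorFam A := by
  ext i j
  simp [tensorFam_apply, Finset.prod_mul_distrib]

lemma tensorFam_diagonal [DecidableEq δ] (a : κ → δ → ℂ) :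
    tensorFam (fun k => diagonal (a k)) = diagonal fun i : κ → δ => ∏ k, a k (i k) := by
  ext i j
  rw [tensorFam_apply]
  obtain rfl | hij := eq_or_ne i j
  · simp
  · obtain ⟨k, hk⟩ := Function.ne_iff.mp hij
    rw [diagonal_apply_ne _ hij]
    exact Finset.prod_eq_zero (Finset.mem_univ k) (diagonal_apply_ne _ hk)

lemma tensorFam_one [DecidableEq δ] : tensorFam (fun _ : κ => (1 : Matrix δ δ ℂ)) = 1 := by
  simp_rw [← diagonal_one, tensorFam_diagonal, Finset.prod_const_one]

lemma tensorFam_sum [DecidableEq κ] {β : Type*} [Fintype β] (A : κ → β → Matrix δ δ ℂ) :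
    tensorFam (fun k => ∑ b, A k b) = ∑ p : κ → β, tensorFam fun k => A k (p k) := by
  ext i j
  simp only [tensorFam_apply, Matrix.sum_apply, Fintype.prod_sum]

lemma tensorFam_sum_smul [DecidableEq κ] {β : Type*} [Fintype β] (q : β → ℝ)
    (A : κ → β → Matrix δ δ ℂ) :
    tensorFam (fun k => ∑ b, q b • A k b) =
      ∑ p : κ → β, (∏ k, q (p k)) • tensorFam fun k => A k (p k) := by
  rw [tensorFam_sum fun k b => q b • A k b]
  exact Finset.sum_congr rfl fun p _ => tensorFam_smul (fun k => q (p k)) fun k => A k (p k)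

section Spectral

variable [DecidableEq κ] [Fintype δ]

lemma tensorFam_mul (A B : κ → Matrix δ δ ℂ) :
    tensorFam A * tensorFam B = tensorFam fun k => A k * B k := by
  ext i j
  simp only [mul_apply, tensorFam_apply, ← Finset.prod_mul_distrib, Fintype.prod_sum]

lemma trace_tensorFam (A : κ → Matrix δ δ ℂ) : (tensorFam A).trace = ∏ k, (A k).trace := by
  simp only [trace, diag, tensorFam_apply, Fintype.prod_sum]

variable [DecidableEq δ]

lemma tensorFam_mem_unitaryGroup (U : κ → unitaryGroup δ ℂ) :
    tensorFam (fun k => (U k : Matrix δ δ ℂ)) ∈ unitaryGroup (κ → δ) ℂ := by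
  have hU (k : κ) : (U k : Matrix δ δ ℂ) * (U k : Matrix δ δ ℂ)ᴴ = 1 :=
    mem_unitaryGroup_iff.mp (U k).2
  rw [mem_unitaryGroup_iff, star_eq_conjTranspose, conjTranspose_tensorFam, tensorFam_mul]
  simp_rw [hU, tensorFam_one]

lemma tensorFam_diagConj (U : κ → unitaryGroup δ ℂ) (a : κ → δ → ℝ) :
    tensorFam (fun k => diagConj (U k) (a k)) =
      diagConj ⟨_, tensorFam_mem_unitaryGroup U⟩ fun i => ∏ k, a k (i k) := by
  simp only [diagConj_apply, Complex.ofReal_prod, conjTranspose_tensorFam]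
  rw [← tensorFam_diagonal fun k j => (a k j : ℂ), tensorFam_mul, tensorFam_mul]

lemma mpow_tensorFam {A : κ → Matrix δ δ ℂ} (hA : ∀ k, 0 ≤ A k) {p : ℝ} (hp : p ≠ 0) :
    mpow (tensorFam A) p = tensorFam fun k => mpow (A k) p := by
  choose U a ha hAU using fun k => exists_eq_diagConj (hA k)
  obtain rfl : A = fun k => diagConj (U k) (a k) := funext hAU
  simp_rw [mpow_diagConj _ (ha _) hp, tensorFam_diagConj]
  rw [mpow_diagConj _ (fun i => Finset.prod_nonneg fun k _ => ha k (i k)) hp]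
  congr 1 with i
  exact (Real.finsetProd_rpow _ _ (fun k _ => ha k (i k)) p).symm

end Spectral

lemma tensorFam_nonneg [Finite δ] {A : κ → Matrix δ δ ℂ} (hA : ∀ k, 0 ≤ A k) :
    0 ≤ tensorFam A := by
  classical
  have := Fintype.ofFinite δ
  choose U a ha hAU using fun k => exists_eq_diagConj (hA k)
  obtain rfl : A = fun k => diagConj (U k) (a k) := funext hAU
  rw [tensorFam_diagConj, diagConj_nonneg_iff]
  exact fun i => Finset.prod_nonneg fun k _ => ha k (i k)

lemma tensorFam_mono [Finite δ] {A B : κ → Matrix δ δ ℂ} (hA : ∀ k, 0 ≤ A k)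
    (hAB : ∀ k, A k ≤ B k) : tensorFam A ≤ tensorFam B := by
  classical
  let C (k : κ) (b : Bool) : Matrix δ δ ℂ := if b then A k else B k - A k
  have hC (k : κ) (b : Bool) : 0 ≤ C k b := by
    cases b
    · exact sub_nonneg.mpr (hAB k)
    · exact hA k
  calc tensorFam A = tensorFam fun k => C k true := rfl
    _ ≤ ∑ p : κ → Bool, tensorFam fun k => C k (p k) :=
        Finset.single_le_sum (f := fun p : κ → Bool => tensorFam fun k => C k (p k))
          (fun p _ => tensorFam_nonneg fun k => hC k (p k)) (Finset.mem_univ fun _ => true)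
    _ = tensorFam B := by
        rw [← tensorFam_sum]
        simp [C]

lemma reTrace_tensorFam [DecidableEq κ] [Fintype δ] {A : κ → Matrix δ δ ℂ} (hA : ∀ k, 0 ≤ A k) :
    reTrace (tensorFam A) = ∏ k, reTrace (A k) := by
  have htrace (k : κ) : (A k).trace = (reTrace (A k) : ℂ) :=
    Complex.eq_re_of_ofReal_le (r := 0)
      (by simpa using (nonneg_iff_posSemidef.mp (hA k)).trace_nonneg)
  rw [reTrace_apply, trace_tensorFam, Finset.prod_congr rfl fun k _ => htrace k,
    ← Complex.ofReal_prod, Complex.ofReal_re]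

lemma isDensity_tensorFam [DecidableEq κ] [Fintype δ] {A : κ → Matrix δ δ ℂ}
    (hA : ∀ k, IsDensity (A k)) : IsDensity (tensorFam A) :=
  ⟨nonneg_iff_posSemidef.mp (tensorFam_nonneg fun k => (hA k).nonneg), by
    rw [trace_tensorFam, Finset.prod_congr rfl fun k _ => (hA k).2, Finset.prod_const_one]⟩

end TensorProducts

section PermutationInvariance

open Matrix
open scoped MatrixOrder

/-- The number of indices `k` of colour `y`. As a function of `y` this is the type (unnormalised
empirical distribution) of `c`. -/
def fiberCard {κ Y : Type*} [Fintype κ] [DecidableEq Y] (c : κ → Y) (y : Y) : ℕ :=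
  Finset.card {k | c k = y}

lemma exists_perm_comp_eq {κ Y : Type*} [Fintype κ] [DecidableEq Y] {f g : κ → Y}
    (h : fiberCard f = fiberCard g) : ∃ π : Equiv.Perm κ, g ∘ π = f := by
  have hfiber (y : Y) : Nonempty ({k // f k = y} ≃ {k // g k = y}) :=
    Fintype.card_eq.mp (by simpa only [Fintype.card_subtype, fiberCard] using congrFun h y)
  let e := fun y => (hfiber y).some
  exact ⟨Equiv.ofFiberEquiv e, funext (Equiv.ofFiberEquiv_map e)⟩

variable {κ Y δ : Type*} [Fintype κ] [DecidableEq κ] [Fintype δ] [DecidableEq δ]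

/-- The action of a permutation of the tensor factors on matrices over the tensor power. -/
def permTensor (π : Equiv.Perm κ) :
    Matrix (κ → δ) (κ → δ) ℂ ≃ₐ[ℂ] Matrix (κ → δ) (κ → δ) ℂ :=
  reindexAlgEquiv ℂ ℂ (π.arrowCongr (Equiv.refl δ))

lemma permTensor_apply (π : Equiv.Perm κ) (A : Matrix (κ → δ) (κ → δ) ℂ) (i j : κ → δ) :
    permTensor π A i j = A (i ∘ π) (j ∘ π) := rfl

lemma permTensor_conjTranspose (π : Equiv.Perm κ) (A : Matrix (κ → δ) (κ → δ) ℂ) :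
    permTensor π Aᴴ = (permTensor π A)ᴴ := rfl

lemma permTensor_tensorFam_comp (π : Equiv.Perm κ) (A : κ → Matrix δ δ ℂ) :
    permTensor π (tensorFam fun k => A (π k)) = tensorFam A := by
  ext i j
  exact Equiv.prod_comp π fun k => A k (i k) (j k)

variable (δ) in
/-- The matrices over the tensor power that commute with all permutations of the tensor factors
preserving the colouring `c`. -/
def colorInvariant (c : κ → Y) : StarSubalgebra ℂ (Matrix (κ → δ) (κ → δ) ℂ) where
  carrier := {s | ∀ π : Equiv.Perm κ, c ∘ π = c → permTensor π s = s}
  mul_mem' ha hb π hπ := by rw [map_mul, ha π hπ, hb π hπ]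
  add_mem' ha hb π hπ := by rw [map_add, ha π hπ, hb π hπ]
  algebraMap_mem' z π _ := AlgEquiv.commutes _ z
  star_mem' ha π hπ := by rw [star_eq_conjTranspose, permTensor_conjTranspose, ha π hπ]

lemma tensorFam_mem_colorInvariant (c : κ → Y) (A : Y → Matrix δ δ ℂ) :
    tensorFam (fun k => A (c k)) ∈ colorInvariant δ c := fun π hπ => by
  conv_lhs => rw [← hπ]
  exact permTensor_tensorFam_comp π fun k => A (c k)

end PermutationInvariance

section UnipotentIdeal

open Matrix

/-- Lower triangular with unit diagonal. -/
def IsLowerUnitriangular {δ : Type*} [LinearOrder δ] (L : Matrix δ δ ℂ) : Prop :=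
  L.BlockTriangular OrderDual.toDual ∧ ∀ i, L i i = 1

variable {κ Y : Type*} [Fintype κ] {d : ℕ}

lemma tensorFam_sub_one_apply_eq_zero {L : κ → Matrix (Fin d) (Fin d) ℂ}
    (hL : ∀ k, IsLowerUnitriangular (L k)) {i j : κ → Fin d}
    (hij : ∑ k, (i k : ℕ) ≤ ∑ k, (j k : ℕ)) : (tensorFam L - 1) i j = 0 := by
  obtain rfl | hne := eq_or_ne i j
  · simp [tensorFam_apply, fun k => (hL k).2]
  obtain ⟨k, hk⟩ : ∃ k, i k < j k := by
    by_contra! hle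
    refine hne (funext fun k => Fin.ext ?_)
    have hle' (k : κ) (_ : k ∈ Finset.univ) : (j k : ℕ) ≤ i k := hle k
    have hsum := le_antisymm (Finset.sum_le_sum hle') hij
    exact ((Finset.sum_eq_sum_iff_of_le hle').mp hsum k (Finset.mem_univ k)).symm
  rw [Matrix.sub_apply, one_apply_ne hne, sub_zero, tensorFam_apply]
  exact Finset.prod_eq_zero (Finset.mem_univ k) ((hL k).1 (OrderDual.toDual_lt_toDual.mpr hk))

variable [DecidableEq κ]

variable (d) in
/-- The left ideal of the colour-invariant matrices that are fixed under right multiplication by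
the tensor powers of lower unitriangular matrices. In representation-theoretic terms it keeps one
extremal-weight vector from each irreducible component, so that it is a faithful module over
`colorInvariant` of small dimension. -/
def unipotentIdeal (c : κ → Y) : Submodule ℂ (Matrix (κ → Fin d) (κ → Fin d) ℂ) where
  carrier := {s | s ∈ colorInvariant (Fin d) c ∧ ∀ L : Y → Matrix (Fin d) (Fin d) ℂ,
    (∀ y, IsLowerUnitriangular (L y)) → s * tensorFam (fun k => L (c k)) = s}
  add_mem' := fun ⟨ha, ha'⟩ ⟨hb, hb'⟩ =>
    ⟨add_mem ha hb, fun L hL => by rw [add_mul, ha' L hL, hb' L hL]⟩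
  zero_mem' := ⟨zero_mem _, fun L _ => zero_mul _⟩
  smul_mem' z a := fun ⟨ha, ha'⟩ =>
    ⟨SMulMemClass.smul_mem z ha, fun L hL => by rw [smul_mul_assoc, ha' L hL]⟩

variable {c : κ → Y}

lemma mul_mem_unipotentIdeal {a s : Matrix (κ → Fin d) (κ → Fin d) ℂ}
    (ha : a ∈ colorInvariant (Fin d) c) (hs : s ∈ unipotentIdeal d c) :
    a * s ∈ unipotentIdeal d c :=
  ⟨mul_mem ha hs.1, fun L hL => by rw [mul_assoc, hs.2 L hL]⟩

-- Multiplying by `tensorFam L - 1` strictly lowers the weight of the nonzero columns, so after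
-- finitely many such multiplications a nonzero matrix lands in the ideal.
lemma exists_mul_mem_unipotentIdeal_of_weight (h : ℕ) {b : Matrix (κ → Fin d) (κ → Fin d) ℂ}
    (hb : b ∈ colorInvariant (Fin d) c) (hb0 : b ≠ 0)
    (hweight : ∀ i j, h ≤ ∑ k, (j k : ℕ) → b i j = 0) :
    ∃ s, b * s ∈ unipotentIdeal d c ∧ b * s ≠ 0 := by
  induction h generalizing b with
  | zero => exact absurd (Matrix.ext fun i j => hweight i j (Nat.zero_le _)) hb0
  | succ h ih =>
    by_cases hbJ : b ∈ unipotentIdeal d c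
    · exact ⟨1, by rwa [mul_one], by rwa [mul_one]⟩
    obtain ⟨L, hL, hbL⟩ : ∃ L : Y → Matrix (Fin d) (Fin d) ℂ,
        (∀ y, IsLowerUnitriangular (L y)) ∧ b * tensorFam (fun k => L (c k)) ≠ b := by
      by_contra! hfix
      exact hbJ ⟨hb, hfix⟩
    let N := tensorFam (fun k => L (c k)) - 1
    have hN : N ∈ colorInvariant (Fin d) c :=
      sub_mem (tensorFam_mem_colorInvariant c L) (one_mem _)
    have hbN : b * N ≠ 0 := by
      rw [mul_sub, mul_one]
      exact sub_ne_zero.mpr hbL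
    have hbN_weight (i j : κ → Fin d) (hj : h ≤ ∑ k, (j k : ℕ)) : (b * N) i j = 0 := by
      rw [mul_apply]
      refine Finset.sum_eq_zero fun l _ => ?_
      obtain hl | hl := le_or_gt (∑ k, (l k : ℕ)) (∑ k, (j k : ℕ))
      · exact mul_eq_zero_of_right _ (tensorFam_sub_one_apply_eq_zero (fun k => hL (c k)) hl)
      · exact mul_eq_zero_of_left (hweight i l (hj.trans_lt hl)) _
    obtain ⟨s, hs⟩ := ih (mul_mem hb hN) hbN hbN_weight
    exact ⟨N * s, by simpa only [mul_assoc] using hs⟩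

lemma eq_zero_of_forall_mul_unipotentIdeal {a : Matrix (κ → Fin d) (κ → Fin d) ℂ}
    (ha : a ∈ colorInvariant (Fin d) c) (h : ∀ s ∈ unipotentIdeal d c, a * s = 0) : a = 0 := by
  by_contra ha0
  have hweight (j : κ → Fin d) : ∑ k, (j k : ℕ) < ∑ _k : κ, d + 1 :=
    Nat.lt_succ_of_le (Finset.sum_le_sum fun k _ => (j k).2.le)
  obtain ⟨s, hsJ, hs⟩ := exists_mul_mem_unipotentIdeal_of_weight (∑ _k : κ, d + 1)
    (star_mem ha) (star_ne_zero.mpr ha0) fun _ j hj => absurd hj (hweight j).not_ge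
  refine hs (conjTranspose_mul_self_eq_zero.mp ?_)
  rw [conjTranspose_mul, star_eq_conjTranspose, conjTranspose_conjTranspose, mul_assoc,
    ← star_eq_conjTranspose a, h _ hsJ, mul_zero]

end UnipotentIdeal

section TypeClasses

variable {κ Y : Type*} [Fintype κ] [DecidableEq Y] [Fintype Y]

lemma prod_comp_eq_prod_pow_fiberCard {M : Type*} [CommMonoid M] (c : κ → Y) (g : Y → M) :
    ∏ k, g (c k) = ∏ y, g y ^ fiberCard c y := by
  simp only [← Finset.prod_fiberwise' Finset.univ c g, Finset.prod_const, fiberCard]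

end TypeClasses

section DimensionBound

open Matrix

variable {κ Y : Type*} [Fintype κ] [DecidableEq κ] {c : κ → Y}

lemma trace_mul_tensorFam {δ : Type*} [Fintype δ] (s : Matrix (κ → δ) (κ → δ) ℂ)
    (A : κ → Matrix δ δ ℂ) :
    (s * tensorFam A).trace = ∑ i, ∑ j, s i j * ∏ k, A k (j k) (i k) := by
  simp only [trace, diag, mul_apply, tensorFam_apply]

section Separation

variable {δ : Type*} [Fintype δ] [DecidableEq δ]
  {s : Matrix (κ → δ) (κ → δ) ℂ}

lemma apply_eq_of_fiberCard_eq [DecidableEq Y] (hs : s ∈ colorInvariant δ c) {i j i' j' : κ → δ}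
    (h : fiberCard (fun k => (c k, i k, j k)) = fiberCard (fun k => (c k, i' k, j' k))) :
    s i j = s i' j' := by
  obtain ⟨π, hπ⟩ := exists_perm_comp_eq h
  have hc : c ∘ π = c := funext fun k => congrArg (·.1) (congrFun hπ k)
  have hi : i' ∘ π = i := funext fun k => congrArg (·.2.1) (congrFun hπ k)
  have hj : j' ∘ π = j := funext fun k => congrArg (·.2.2) (congrFun hπ k)
  rw [← hi, ← hj]
  exact congrFun (congrFun (hs π hc) i') j'

-- As a function of the entries of `A`, the trace is a polynomial whose coefficients are positive
-- multiples of the entries of `s`.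
lemma eq_zero_of_forall_trace_mul_tensorFam_eq_zero [Finite Y] (hs : s ∈ colorInvariant δ c)
    (h : ∀ A : Y → Matrix δ δ ℂ, (s * tensorFam fun k => A (c k)).trace = 0) : s = 0 := by
  classical
  have := Fintype.ofFinite Y
  let μ (p : (κ → δ) × (κ → δ)) : Y × δ × δ →₀ ℕ :=
    Finsupp.equivFunOnFinite.symm (fiberCard fun k => (c k, p.1 k, p.2 k))
  let F : MvPolynomial (Y × δ × δ) ℂ := ∑ p, MvPolynomial.monomial (μ p) (s p.1 p.2)
  have hF : F = 0 := by
    refine MvPolynomial.funext fun x => ?_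
    rw [map_zero, ← h fun y => Matrix.of fun q p => x (y, p, q), trace_mul_tensorFam,
      ← Fintype.sum_prod_type', map_sum]
    refine Finset.sum_congr rfl fun p _ => ?_
    rw [MvPolynomial.eval_monomial, Finsupp.prod_fintype _ _ fun _ => pow_zero _]
    exact congrArg _ (prod_comp_eq_prod_pow_fiberCard _ x).symm
  ext i j
  have hcoeff : F.coeff (μ (i, j)) = Finset.card {p | μ p = μ (i, j)} • s i j := by
    simp only [F, MvPolynomial.coeff_sum, MvPolynomial.coeff_monomial, ← Finset.sum_filter]
    refine Finset.sum_eq_card_nsmul fun p hp => ?_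
    exact apply_eq_of_fiberCard_eq hs
      (Finsupp.equivFunOnFinite.symm.injective (Finset.mem_filter.mp hp).2)
  rw [hF, MvPolynomial.coeff_zero, eq_comm, nsmul_eq_mul] at hcoeff
  refine (mul_eq_zero.mp hcoeff).resolve_left (Nat.cast_ne_zero.mpr ?_)
  exact Finset.card_ne_zero_of_mem (Finset.mem_filter.mpr ⟨Finset.mem_univ (i, j), rfl⟩)

end Separation

section Elimination

variable {d : ℕ}

/-- The first `m` columns of `A` vanish below the diagonal: the state of Gaussian elimination
after `m` steps. -/
def IsEliminated (m : ℕ) (A : Matrix (Fin d) (Fin d) ℂ) : Prop :=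
  ∀ p q : Fin d, q < p → (q : ℕ) < m → A p q = 0

lemma IsEliminated.exists_mul {m : Fin d} {A : Matrix (Fin d) (Fin d) ℂ} (hA : IsEliminated m A)
    (hpivot : A m m ≠ 0) :
    ∃ L, IsLowerUnitriangular L ∧ IsEliminated (m + 1) (L * A) := by
  let v : Fin d → ℂ := fun p => if m < p then A p m / A m m else 0
  refine ⟨1 - vecMulVec v (Pi.single m 1), ⟨fun i j hij => ?_, fun i => ?_⟩, fun p q hqp hq => ?_⟩
  · have hij' : i < j := hij
    obtain rfl | hj := eq_or_ne j m
    · simp [v, hij'.ne, hij'.not_gt, vecMulVec_apply]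
    · simp [hij'.ne, hj, vecMulVec_apply]
  · obtain rfl | hi := eq_or_ne i m <;> simp [v, vecMulVec_apply, *]
  · rw [sub_mul, one_mul, vecMulVec_mul, single_one_vecMul, Matrix.sub_apply, vecMulVec_apply]
    obtain hqm | hqm := (Nat.lt_succ_iff.mp hq).lt_or_eq
    · simp [hA p q hqp hqm, hA m q hqm hqm]
    · obtain rfl : q = m := Fin.ext hqm
      simp [v, hqp, hpivot]

variable {s : Matrix (κ → Fin d) (κ → Fin d) ℂ}

lemma trace_mul_tensorFam_mul (hs : s ∈ unipotentIdeal d c) {L : Y → Matrix (Fin d) (Fin d) ℂ}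
    (hL : ∀ y, IsLowerUnitriangular (L y)) (A : Y → Matrix (Fin d) (Fin d) ℂ) :
    (s * tensorFam fun k => L (c k) * A (c k)).trace =
      (s * tensorFam fun k => A (c k)).trace := by
  rw [← tensorFam_mul (fun k => L (c k)) fun k => A (c k), ← mul_assoc, hs.2 L hL]

-- Gaussian elimination needs nonzero pivots; these hold on a dense set of perturbations of `A`.
lemma trace_mul_tensorFam_eq_zero_of_isEliminated_succ [Finite Y] (hs : s ∈ unipotentIdeal d c)
    (m : Fin d) (hsucc : ∀ A : Y → Matrix (Fin d) (Fin d) ℂ, (∀ y, IsEliminated (m + 1) (A y)) →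
      (s * tensorFam fun k => A (c k)).trace = 0)
    {A : Y → Matrix (Fin d) (Fin d) ℂ} (hA : ∀ y, IsEliminated m (A y)) :
    (s * tensorFam fun k => A (c k)).trace = 0 := by
  have hpivot (A : Y → Matrix (Fin d) (Fin d) ℂ) (hA : ∀ y, IsEliminated m (A y))
      (hAm : ∀ y, A y m m ≠ 0) : (s * tensorFam fun k => A (c k)).trace = 0 := by
    choose L hL hLA using fun y => (hA y).exists_mul (hAm y)
    rw [← trace_mul_tensorFam_mul hs hL A]
    exact hsucc (fun y => L y * A y) hLA
  let g : ℂ → ℂ := fun z => (s * tensorFam fun k => A (c k) + z • single m m 1).trace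
  have hg : Continuous g := by
    simp only [g, trace_mul_tensorFam, Matrix.add_apply, Matrix.smul_apply, smul_eq_mul]
    fun_prop
  have hdense : Dense (Set.range fun y => -A y m m)ᶜ :=
    (Set.finite_range _).countable.dense_compl ℝ
  have hg0 : g = 0 := by
    refine Continuous.ext_on hdense hg continuous_const fun z hz => ?_
    refine hpivot (fun y => A y + z • single m m 1) (fun y p q hqp hq => ?_) fun y hy => hz ⟨y, ?_⟩
    · have hmm : ¬(m = p ∧ m = q) := fun ⟨hp, hq⟩ => hqp.ne (hq ▸ hp)
      simp [hA y p q hqp hq, hmm]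
    · rw [Matrix.add_apply, Matrix.smul_apply, single_apply_same, smul_eq_mul, mul_one] at hy
      exact (eq_neg_of_add_eq_zero_right hy).symm
  simpa [g] using congrFun hg0 0

lemma trace_mul_tensorFam_eq_zero [Finite Y] (hs : s ∈ unipotentIdeal d c)
    (hs0 : ∀ i j, j ≤ i → s i j = 0) (A : Y → Matrix (Fin d) (Fin d) ℂ) :
    (s * tensorFam fun k => A (c k)).trace = 0 := by
  suffices h : ∀ m ≤ d, ∀ A : Y → Matrix (Fin d) (Fin d) ℂ, (∀ y, IsEliminated m (A y)) →
      (s * tensorFam fun k => A (c k)).trace = 0 from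
    h 0 d.zero_le A fun _ _ _ _ hq => absurd hq (Nat.not_lt_zero _)
  intro m hm
  induction hm using Nat.decreasingInduction with
  | self =>
    intro A hA
    rw [trace_mul_tensorFam]
    refine Finset.sum_eq_zero fun i _ => Finset.sum_eq_zero fun j _ => ?_
    by_cases hij : j ≤ i
    · rw [hs0 i j hij, zero_mul]
    · obtain ⟨k, hk⟩ := not_forall.mp hij
      rw [Finset.prod_eq_zero (Finset.mem_univ k) (hA _ _ _ (not_le.mp hk) (i k).2), mul_zero]
  | of_succ m hm ih =>
    exact fun A hA => trace_mul_tensorFam_eq_zero_of_isEliminated_succ hs ⟨m, hm⟩ ih hA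

end Elimination

lemma finrank_le_card_of_separating {V ι τ : Type*} [AddCommGroup V] [Module ℂ V] [Fintype τ]
    (φ : ι → V →ₗ[ℂ] ℂ) (f : ι → τ) (hφ : ∀ i j, f i = f j → φ i = φ j)
    (hsep : ∀ v, (∀ i, φ i v = 0) → v = 0) : Module.finrank ℂ V ≤ Fintype.card τ := by
  classical
  let Φ : V →ₗ[ℂ] (Set.range f → ℂ) := LinearMap.pi fun t => φ (Set.rangeSplitting f t)
  have hΦ : Function.Injective Φ := by
    refine (injective_iff_map_eq_zero Φ).mpr fun v hv => hsep v fun i => ?_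
    rw [hφ i _ (Set.apply_rangeSplitting f ⟨f i, i, rfl⟩).symm]
    exact congrFun hv ⟨f i, i, rfl⟩
  calc Module.finrank ℂ V ≤ Module.finrank ℂ (Set.range f → ℂ) :=
        LinearMap.finrank_le_finrank_of_injective hΦ
    _ = Fintype.card (Set.range f) := Module.finrank_fintype_fun_eq_card ℂ
    _ ≤ Fintype.card τ := set_fintype_card_le_univ _

/-- The number of monomials of degree `m` in the entries of a triangular `d × d` matrix. -/
def triangularMonomials (d m : ℕ) : ℕ := ((d + 1).choose 2).multichoose m

lemma card_sym_triangular (d m : ℕ) :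
    Fintype.card (Sym {p : Fin d × Fin d // p.1 ≤ p.2} m) = triangularMonomials d m := by
  rw [Sym.card_sym_eq_multichoose, ← Fintype.card_congr Sym2.sortEquiv, Sym2.card,
    Fintype.card_fin, triangularMonomials]

lemma finrank_unipotentIdeal_le [Fintype Y] [DecidableEq Y] (d : ℕ) (c : κ → Y) :
    Module.finrank ℂ (unipotentIdeal d c) ≤ ∏ y, triangularMonomials d (fiberCard c y) := by
  let entry (p : {p : (κ → Fin d) × (κ → Fin d) // p.1 ≤ p.2}) : unipotentIdeal d c →ₗ[ℂ] ℂ :=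
    (entryLinearMap ℂ ℂ p.1.2 p.1.1).comp (unipotentIdeal d c).subtype
  let type (p : {p : (κ → Fin d) × (κ → Fin d) // p.1 ≤ p.2}) (y : Y) :
      Sym {p : Fin d × Fin d // p.1 ≤ p.2} (fiberCard c y) :=
    ⟨(Finset.univ.filter fun k => c k = y).val.map fun k => ⟨(p.1.1 k, p.1.2 k), p.2 k⟩,
      Multiset.card_map _ _⟩
  have hcard := finrank_le_card_of_separating entry type ?_ ?_
  · simpa only [Fintype.card_pi, card_sym_triangular] using hcard
  · intro p q hpq
    refine LinearMap.ext fun s => apply_eq_of_fiberCard_eq s.2.1 (funext fun ⟨y, a, b⟩ => ?_)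
    have hcount := congrArg (fun t => (t.1.map fun t => (t.1.2, t.1.1)).count (a, b))
      (congrFun hpq y)
    simpa [type, Multiset.count_map, ← Finset.filter_val, Finset.filter_filter, fiberCard,
      eq_comm] using hcount
  · intro s hs
    refine Subtype.ext (eq_zero_of_forall_trace_mul_tensorFam_eq_zero s.2.1 fun A => ?_)
    exact trace_mul_tensorFam_eq_zero s.2 (fun i j hij => hs ⟨(j, i), hij⟩) A

open scoped MatrixOrder in
theorem exists_colorInvariant_universal [Fintype Y] [DecidableEq Y] (d : ℕ) (c : κ → Y) :
    ∃ σ ∈ colorInvariant (Fin d) c, σ.PosDef ∧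
      (∀ a ∈ colorInvariant (Fin d) c, Commute a σ) ∧
      reTrace σ ≤ ∏ y, (triangularMonomials d (fiberCard c y) : ℝ) ∧
      ∀ τ ∈ colorInvariant (Fin d) c, IsDensity τ → τ ≤ σ := by
  obtain ⟨σ, hσ, hσpos, hσcomm, hσtrace, hσuniv⟩ := exists_universal_operator
    (colorInvariant (Fin d) c) (unipotentIdeal d c) (fun _ hs => hs.1)
    (fun _ ha _ hs => mul_mem_unipotentIdeal ha hs)
    (fun _ ha => eq_zero_of_forall_mul_unipotentIdeal ha)
  refine ⟨σ, hσ, hσpos, hσcomm, hσtrace.trans_le (mod_cast finrank_unipotentIdeal_le d c),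
    fun τ hτ hdens => ?_⟩
  simpa only [hdens.reTrace_eq_one, one_smul] using hσuniv τ hτ hdens.nonneg

end DimensionBound

section Counting

open scoped Nat

lemma card_piAntidiag_univ {S : Type*} [Fintype S] [DecidableEq S] (n : ℕ) :
    (Finset.piAntidiag (Finset.univ : Finset S) n).card = (Fintype.card S).multichoose n := by
  rw [← Finset.card_univ, ← Finset.card_finsuppAntidiag_nat_eq_multichoose,
    Finset.finsuppAntidiag]
  simp

lemma multichoose_succ_le_pow (e m : ℕ) : (e + 1).multichoose m ≤ (m + 1) ^ e := by
  rw [Nat.multichoose_eq, show e + 1 + m - 1 = m + e by omega, Nat.choose_symm_add]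
  exact Nat.choose_add_le_add_one_pow m e

lemma multichoose_pos {e : ℕ} (he : 0 < e) (m : ℕ) : 0 < e.multichoose m := by
  rw [Nat.multichoose_eq]
  exact Nat.choose_pos (by omega)

lemma multichoose_succ_le_mul_multichoose {n p : ℕ} (hn : 2 ≤ n) (hp : 2 ≤ p) :
    (p + 1).multichoose n ≤ n * p.multichoose n := by
  have hrec : p.multichoose n * (n + p) = (p + 1).multichoose n * p := by
    have h := Nat.choose_mul_succ_eq (p + n - 1) n
    rw [show p + n - 1 + 1 = p + n by omega, Nat.add_sub_cancel] at h
    rw [Nat.multichoose_eq, Nat.multichoose_eq, show p + 1 + n - 1 = p + n by omega, add_comm n p]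
    exact h
  refine Nat.le_of_mul_le_mul_right (c := p) ?_ (by omega)
  calc (p + 1).multichoose n * p = p.multichoose n * (n + p) := hrec.symm
    _ ≤ p.multichoose n * (n * p) := Nat.mul_le_mul_left _ (by nlinarith)
    _ = n * p.multichoose n * p := by ring

lemma multichoose_add_le_pow_mul_multichoose {n p : ℕ} (hn : 2 ≤ n) (hp : 2 ≤ p) (a : ℕ) :
    (p + a).multichoose n ≤ n ^ a * p.multichoose n := by
  induction a with
  | zero => simp
  | succ a ih =>
    calc (p + a + 1).multichoose n ≤ n * (p + a).multichoose n :=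
          multichoose_succ_le_mul_multichoose hn (by omega)
      _ ≤ n * (n ^ a * p.multichoose n) := Nat.mul_le_mul_left _ ih
      _ = n ^ (a + 1) * p.multichoose n := by ring

section Partitions

lemma exists_perm_comp_eq_of_filter_ne_zero_eq {κ : Type*} [Fintype κ] {f g : κ → ℕ}
    (h : (Finset.univ.val.map f).filter (· ≠ 0) = (Finset.univ.val.map g).filter (· ≠ 0)) :
    ∃ π : Equiv.Perm κ, g ∘ π = f := by
  have hmap : Finset.univ.val.map f = Finset.univ.val.map g := by
    have hf := Multiset.filter_add_not (· ≠ 0) (Finset.univ.val.map f)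
    have hg := Multiset.filter_add_not (· ≠ 0) (Finset.univ.val.map g)
    have hcard := congrArg Multiset.card hf
    have hcard' := congrArg Multiset.card hg
    simp only [not_not, Multiset.filter_eq', h, Multiset.card_add, Multiset.card_map,
      Multiset.card_replicate] at hf hg hcard hcard'
    rw [Nat.add_left_cancel (hcard.trans hcard'.symm)] at hf
    exact hf.symm.trans hg
  refine exists_perm_comp_eq (funext fun z => ?_)
  simpa [Multiset.count_map, ← Finset.filter_val, fiberCard, eq_comm] using
    congrArg (Multiset.count z) hmap

lemma multichoose_le_factorial_mul_numPartLe (n d : ℕ) :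
    d.multichoose n ≤ d ! * numPartLe n d := by
  classical
  let shape (f : Finset.piAntidiag (Finset.univ : Finset (Fin d)) n) :
      {p : Nat.Partition n // p.parts.card ≤ d} :=
    have hsum : (Finset.univ.val.map f.1).sum = n := (Finset.mem_piAntidiag.mp f.2).1
    ⟨Nat.Partition.ofSums n (Finset.univ.val.map f.1) hsum, by
      rw [Nat.Partition.ofSums_parts]
      refine (Multiset.card_le_card (Multiset.filter_le _ _)).trans ?_
      simp⟩
  have hfiber (p : {p : Nat.Partition n // p.parts.card ≤ d}) :
      Finset.card {f | shape f = p} ≤ d ! := by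
    obtain hempty | ⟨g, hg⟩ := (Finset.univ.filter fun f => shape f = p).eq_empty_or_nonempty
    · exact hempty ▸ Nat.zero_le _
    have hperm (f) (hf : f ∈ Finset.univ.filter fun f => shape f = p) :
        ∃ π : Equiv.Perm (Fin d), g.1 ∘ π = f.1 :=
      exists_perm_comp_eq_of_filter_ne_zero_eq (congrArg (·.1.parts)
        ((Finset.mem_filter.mp hf).2.trans (Finset.mem_filter.mp hg).2.symm))
    choose! π hπ using hperm
    calc Finset.card {f | shape f = p} ≤ (Finset.univ : Finset (Equiv.Perm (Fin d))).card :=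
          Finset.card_le_card_of_injOn π (fun _ _ => Finset.mem_univ _) fun f hf f' hf' h =>
            Subtype.ext (by rw [← hπ f hf, ← hπ f' hf', h])
      _ = d ! := by rw [Finset.card_univ, Fintype.card_perm, Fintype.card_fin]
  have hcard := Finset.card_le_mul_card_image_of_maps_to
    (fun f _ => Finset.mem_univ (shape f)) (d !) fun p _ => hfiber p
  rwa [Finset.card_univ, Fintype.card_coe, card_piAntidiag_univ, Fintype.card_fin,
    Finset.card_univ, ← Nat.card_eq_fintype_card] at hcard

lemma numPartLe_pos {d : ℕ} (hd : 0 < d) (n : ℕ) : 0 < numPartLe n d :=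
  Nat.pos_of_mul_pos_left
    ((multichoose_pos hd n).trans_le (multichoose_le_factorial_mul_numPartLe n d))

end Partitions

section TriangularMonomials

lemma succ_choose_two_eq {d : ℕ} (hd : 0 < d) :
    (d + 1).choose 2 = d - 1 + d.choose 2 + 1 := by
  have hpascal : (d + 1).choose 2 = d.choose 1 + d.choose 2 := Nat.choose_succ_succ' d 1
  rw [hpascal, Nat.choose_one_right]
  omega

variable {d n : ℕ}

lemma triangularMonomials_pos (hd : 0 < d) (m : ℕ) : 0 < triangularMonomials d m :=
  multichoose_pos (Nat.choose_pos (by omega)) m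

lemma triangularMonomials_le_pow (hd : 0 < d) (m : ℕ) :
    triangularMonomials d m ≤ (m + 1) ^ (d - 1 + d.choose 2) := by
  rw [triangularMonomials, succ_choose_two_eq hd]
  exact multichoose_succ_le_pow _ m

lemma triangularMonomials_le_mul_numPartLe (hd : 0 < d) (hn : 2 ≤ n) :
    triangularMonomials d n ≤ n ^ d.choose 2 * (d ! * numPartLe n d) := by
  obtain rfl | hd2 := Nat.eq_or_lt_of_le hd
  · simpa [triangularMonomials] using Nat.succ_le_of_lt (numPartLe_pos one_pos n)
  · rw [triangularMonomials, show (d + 1).choose 2 = d + d.choose 2 by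
      rw [Nat.choose_succ_succ' d 1, Nat.choose_one_right]]
    exact (multichoose_add_le_pow_mul_multichoose hn hd2 _).trans
      (Nat.mul_le_mul_left _ (multichoose_le_factorial_mul_numPartLe n d))

lemma mul_four_pow_le_nine_pow (j : ℕ) : j * 4 ^ j ≤ 9 ^ j := by
  induction j with
  | zero => simp
  | succ j ih =>
    have hpow : 4 ^ j ≤ 9 ^ j := Nat.pow_le_pow_left (by norm_num) j
    calc (j + 1) * 4 ^ (j + 1) = 4 * (j * 4 ^ j) + 4 * 4 ^ j := by ring
      _ ≤ 4 * 9 ^ j + 4 * 9 ^ j := by gcongr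
      _ ≤ 9 ^ (j + 1) := by
        rw [pow_succ]
        omega

lemma factorial_mul_four_pow_le_nine_pow (d : ℕ) :
    d ! * 4 ^ (d - 1 + d.choose 2) ≤ 9 ^ (d - 1 + d.choose 2) := by
  induction d with
  | zero => simp
  | succ d ih =>
    obtain rfl | hd := d.eq_zero_or_pos
    · simp
    have hexp : d + 1 - 1 + (d + 1).choose 2 = (d + 1) + (d - 1 + d.choose 2) := by
      rw [succ_choose_two_eq hd]
      omega
    rw [hexp, pow_add 4, pow_add 9, Nat.factorial_succ]
    calc (d + 1) * d ! * (4 ^ (d + 1) * 4 ^ (d - 1 + d.choose 2))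
        = ((d + 1) * 4 ^ (d + 1)) * (d ! * 4 ^ (d - 1 + d.choose 2)) := by ring
      _ ≤ 9 ^ (d + 1) * 9 ^ (d - 1 + d.choose 2) :=
        Nat.mul_le_mul (mul_four_pow_le_nine_pow _) ih

variable {X : Type*} [Fintype X] {m : X → ℕ}

-- With at least two parts, the extreme case is `n = 2 = 1 + 1`, where `9 * 4 ≤ 4 * 9`.
lemma nine_mul_prod_add_one_le (hX : 2 ≤ Fintype.card X) (hn : 2 ≤ n) (hm : ∑ y, m y = n) :
    9 * ∏ y, (m y + 1) ≤ 4 * (n + 1) ^ Fintype.card X := by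
  classical
  obtain ⟨a, b, hab⟩ := Fintype.one_lt_card_iff.mp hX
  have hb : b ∈ Finset.univ.erase a := Finset.mem_erase.mpr ⟨hab.symm, Finset.mem_univ _⟩
  let rest : Finset X := (Finset.univ.erase a).erase b
  have hcard : rest.card = Fintype.card X - 2 := by
    rw [Finset.card_erase_of_mem hb, Finset.card_erase_of_mem (Finset.mem_univ a),
      Finset.card_univ, Nat.sub_sub]
  rw [← Finset.add_sum_erase _ _ (Finset.mem_univ a), ← Finset.add_sum_erase _ _ hb] at hm
  have hrest : ∏ y ∈ rest, (m y + 1) ≤ (n + 1) ^ (Fintype.card X - 2) := by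
    rw [← hcard]
    refine Finset.prod_le_pow_card _ _ _ fun y hy => ?_
    have hy : m y ≤ ∑ x ∈ (Finset.univ.erase a).erase b, m x :=
      Finset.single_le_sum (fun i _ => Nat.zero_le _) hy
    omega
  have hpair : 9 * ((m a + 1) * (m b + 1)) ≤ 4 * (n + 1) ^ 2 := by
    have hsum : m a + m b ≤ n := by omega
    zify at *
    nlinarith [sq_nonneg ((m a : ℤ) - m b)]
  calc 9 * ∏ y, (m y + 1) = 9 * ((m a + 1) * (m b + 1)) * ∏ y ∈ rest, (m y + 1) := by
        rw [← Finset.mul_prod_erase _ _ (Finset.mem_univ a), ← Finset.mul_prod_erase _ _ hb]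
        ring
    _ ≤ (4 * (n + 1) ^ 2) * (n + 1) ^ (Fintype.card X - 2) := Nat.mul_le_mul hpair hrest
    _ = 4 * (n + 1) ^ Fintype.card X := by
      rw [mul_assoc, ← pow_add, Nat.add_sub_cancel' hX]

lemma prod_triangularMonomials_le (hd : 0 < d) (m : X → ℕ) :
    ∏ y, triangularMonomials d (m y) ≤ (∏ y, (m y + 1)) ^ (d - 1 + d.choose 2) := by
  rw [← Finset.prod_pow]
  exact Finset.prod_le_prod' fun y _ => triangularMonomials_le_pow hd _

lemma triangularMonomials_one_mul_prod_le (hX : 2 ≤ Fintype.card X) (hd : 0 < d)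
    (hm : ∑ y, m y = 1) :
    triangularMonomials d 1 * ∏ y, triangularMonomials d (m y) ≤
      numPartLe 1 d * 2 ^ (Fintype.card X * (d - 1 + d.choose 2)) := by
  have hprod : ∏ y, (m y + 1) ≤ 2 := by
    calc ∏ y, (m y + 1) ≤ ∏ y, 2 ^ m y := Finset.prod_le_prod' fun y _ => Nat.lt_two_pow_self
      _ = 2 := by rw [Finset.prod_pow_eq_pow_sum, hm, pow_one]
  set e := d - 1 + d.choose 2
  calc triangularMonomials d 1 * ∏ y, triangularMonomials d (m y)
      ≤ (1 + 1) ^ e * 2 ^ e := Nat.mul_le_mul (triangularMonomials_le_pow hd 1)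
        ((prod_triangularMonomials_le hd m).trans (Nat.pow_le_pow_left hprod _))
    _ = 2 ^ (2 * e) := by ring
    _ ≤ 2 ^ (Fintype.card X * e) :=
      Nat.pow_le_pow_right two_pos (Nat.mul_le_mul_right _ hX)
    _ ≤ numPartLe 1 d * 2 ^ (Fintype.card X * e) :=
      Nat.le_mul_of_pos_left _ (numPartLe_pos hd 1)

lemma triangularMonomials_mul_prod_le (hX : 2 ≤ Fintype.card X) (hn : 1 ≤ n) (hd : 0 < d)
    (hm : ∑ y, m y = n) :
    triangularMonomials d n * ∏ y, triangularMonomials d (m y) ≤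
      n ^ d.choose 2 * numPartLe n d * (n + 1) ^ (Fintype.card X * (d - 1 + d.choose 2)) := by
  obtain rfl | hn2 := hn.eq_or_lt
  · simpa using triangularMonomials_one_mul_prod_le hX hd hm
  have hfact := factorial_mul_four_pow_le_nine_pow d
  have htri := triangularMonomials_le_mul_numPartLe hd hn2
  have hprod := prod_triangularMonomials_le hd m
  set e := d - 1 + d.choose 2
  refine Nat.le_of_mul_le_mul_right (c := 9 ^ e) ?_ (by positivity)
  calc triangularMonomials d n * (∏ y, triangularMonomials d (m y)) * 9 ^ e
      ≤ n ^ d.choose 2 * (d ! * numPartLe n d) * (∏ y, (m y + 1)) ^ e * 9 ^ e := by gcongr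
    _ = n ^ d.choose 2 * (d ! * numPartLe n d) * (9 * ∏ y, (m y + 1)) ^ e := by
      rw [mul_pow]
      ring
    _ ≤ n ^ d.choose 2 * (d ! * numPartLe n d) * (4 * (n + 1) ^ Fintype.card X) ^ e :=
      Nat.mul_le_mul_left _ (Nat.pow_le_pow_left (nine_mul_prod_add_one_le hX hn2 hm) e)
    _ = n ^ d.choose 2 * numPartLe n d * (n + 1) ^ (Fintype.card X * e) * (d ! * 4 ^ e) := by
      rw [mul_pow, ← pow_mul]
      ring
    _ ≤ n ^ d.choose 2 * numPartLe n d * (n + 1) ^ (Fintype.card X * e) * 9 ^ e := by gcongr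

end TriangularMonomials

section Types

lemma pow_mul_factorial_le (a k : ℕ) : a ^ k * a ! ≤ a ^ a * k ! := by
  obtain h | h := le_total a k
  · calc a ^ k * a ! = a ^ a * (a ! * a ^ (k - a)) := by
          rw [mul_left_comm, ← pow_add, Nat.add_sub_cancel' h, mul_comm]
      _ ≤ a ^ a * k ! := Nat.mul_le_mul_left _ (Nat.factorial_mul_pow_sub_le_factorial h)
  · calc a ^ k * a ! = a ^ k * (k ! * a.descFactorial (a - k)) := by
          rw [← Nat.factorial_mul_descFactorial (Nat.sub_le a k), Nat.sub_sub_self h]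
      _ ≤ a ^ k * (k ! * a ^ (a - k)) := by
          gcongr
          exact Nat.descFactorial_le_pow a (a - k)
      _ = a ^ a * k ! := by rw [mul_left_comm, ← pow_add, Nat.add_sub_cancel' h, mul_comm]

variable {S : Type*} [Fintype S]

-- Among all types `k`, the multinomial distribution with parameters `m / n` is most likely to
-- produce the type `m` itself.
lemma pow_mul_prod_factorial_le [Nonempty S] {m : S → ℕ} {n : ℕ} (hm : ∑ a, m a = n) :
    n ^ n * ∏ a, (m a)! ≤ (n + 1) ^ (Fintype.card S - 1) * n ! * ∏ a, m a ^ m a := by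
  classical
  have hterm (k : S → ℕ) (hk : ∑ a, k a = n) :
      Nat.multinomial Finset.univ k * (∏ a, m a ^ k a) * ∏ a, (m a)! ≤
        n ! * ∏ a, m a ^ m a := by
    refine Nat.le_of_mul_le_mul_left (c := ∏ a, (k a)!) ?_
      (Finset.prod_pos fun a _ => Nat.factorial_pos _)
    calc (∏ a, (k a)!) * (Nat.multinomial Finset.univ k * (∏ a, m a ^ k a) * ∏ a, (m a)!)
        = ((∏ a, (k a)!) * Nat.multinomial Finset.univ k) * ∏ a, (m a ^ k a * (m a)!) := by
          rw [Finset.prod_mul_distrib]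
          ring
      _ ≤ n ! * ∏ a, (m a ^ m a * (k a)!) := by
          rw [Nat.multinomial_spec, hk]
          exact Nat.mul_le_mul_left _ (Finset.prod_le_prod' fun a _ => pow_mul_factorial_le _ _)
      _ = (∏ a, (k a)!) * (n ! * ∏ a, m a ^ m a) := by
          rw [Finset.prod_mul_distrib]
          ring
  have hcard : (Finset.piAntidiag (Finset.univ : Finset S) n).card ≤
      (n + 1) ^ (Fintype.card S - 1) := by
    rw [card_piAntidiag_univ, ← Nat.sub_add_cancel (Fintype.card_pos (α := S)),
      Nat.add_sub_cancel]
    exact multichoose_succ_le_pow _ n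
  calc n ^ n * ∏ a, (m a)!
      = ∑ k ∈ Finset.piAntidiag (Finset.univ : Finset S) n,
          Nat.multinomial Finset.univ k * (∏ a, m a ^ k a) * ∏ a, (m a)! := by
        have hpow := Finset.sum_pow_eq_sum_piAntidiag (Finset.univ : Finset S) m n
        rw [hm] at hpow
        simp [hpow, Finset.sum_mul]
    _ ≤ (Finset.piAntidiag (Finset.univ : Finset S) n).card * (n ! * ∏ a, m a ^ m a) :=
        Finset.sum_le_card_nsmul _ _ _ fun k hk => hterm k (Finset.mem_piAntidiag.mp hk).1
    _ ≤ (n + 1) ^ (Fintype.card S - 1) * n ! * ∏ a, m a ^ m a := by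
        rw [← mul_assoc]
        gcongr

variable [DecidableEq S] {κ : Type*} [Fintype κ]

lemma sum_fiberCard (s : κ → S) : ∑ a, fiberCard s a = Fintype.card κ :=
  (Finset.card_eq_sum_card_fiberwise fun _ _ => Finset.mem_univ _).symm

lemma prod_fiberCard_comp_perm (s : κ → S) (π : Equiv.Perm κ) :
    ∏ k, fiberCard s (s (π k)) = ∏ a, fiberCard s a ^ fiberCard s a := by
  rw [Equiv.prod_comp π fun k => fiberCard s (s k), prod_comp_eq_prod_pow_fiberCard]

variable [DecidableEq κ]

lemma card_perm_comp_eq (s : κ → S) (π₀ : Equiv.Perm κ) :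
    Finset.card {π : Equiv.Perm κ | s ∘ π = s ∘ π₀} = ∏ a, (fiberCard s a)! := by
  have hstab := DomMulAct.stabilizer_card s
  simp only [Fintype.card_subtype] at hstab
  refine Eq.trans ?_ hstab
  refine Finset.card_equiv (Equiv.mulRight π₀⁻¹) fun π => ?_
  simp only [Finset.mem_filter, Finset.mem_univ, true_and, Equiv.coe_mulRight,
    Equiv.Perm.coe_mul, Equiv.Perm.inv_def, ← Function.comp_assoc]
  exact (Equiv.comp_symm_eq π₀ s (s ∘ π)).symm

lemma card_perm_comp_eq_le [Nonempty κ] (s s' : κ → S) :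
    (Finset.card {π : Equiv.Perm κ | s ∘ π = s'} : ℝ) ≤
      (Fintype.card κ)! * ((Fintype.card κ : ℝ) + 1) ^ (Fintype.card S - 1) *
        ∏ k, ((fiberCard s (s' k) : ℝ) / Fintype.card κ) := by
  have : Nonempty S := Nonempty.map s inferInstance
  obtain hempty | ⟨π₀, hπ₀⟩ :=
    (Finset.univ.filter fun π : Equiv.Perm κ => s ∘ π = s').eq_empty_or_nonempty
  · rw [hempty, Finset.card_empty, Nat.cast_zero]
    positivity
  obtain rfl : s ∘ π₀ = s' := (Finset.mem_filter.mp hπ₀).2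
  have hcount := pow_mul_prod_factorial_le (sum_fiberCard s)
  rw [← card_perm_comp_eq s π₀, ← prod_fiberCard_comp_perm s π₀] at hcount
  rw [Finset.prod_div_distrib, Finset.prod_const, Finset.card_univ, mul_div_assoc',
    le_div_iff₀ (by positivity)]
  calc _ = (((Fintype.card κ) ^ (Fintype.card κ) *
        Finset.card {π : Equiv.Perm κ | s ∘ π = s ∘ π₀} : ℕ) : ℝ) := by
        push_cast
        ring
    _ ≤ _ := Nat.cast_le.mpr hcount
    _ = _ := by
        push_cast
        simp only [Function.comp_apply]
        ring

theorem sum_perm_comp_le [Nonempty κ] (s : κ → S) {g : (κ → S) → ℝ} (hg : 0 ≤ g) :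
    ∑ π : Equiv.Perm κ, g (s ∘ π) ≤
      (Fintype.card κ)! * ((Fintype.card κ : ℝ) + 1) ^ (Fintype.card S - 1) *
        ∑ s' : κ → S, (∏ k, ((fiberCard s (s' k) : ℝ) / Fintype.card κ)) * g s' := by
  calc ∑ π : Equiv.Perm κ, g (s ∘ π)
      = ∑ s', (Finset.card {π : Equiv.Perm κ | s ∘ π = s'} : ℝ) * g s' := by
        simp only [← Finset.sum_fiberwise' Finset.univ (fun π : Equiv.Perm κ => s ∘ π) g,
          Finset.sum_const, nsmul_eq_mul]
    _ ≤ _ := by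
        simp only [Finset.mul_sum, ← mul_assoc]
        exact Finset.sum_le_sum fun s' _ =>
          mul_le_mul_of_nonneg_right (card_perm_comp_eq_le s s') (hg s')

end Types

end Counting

section CqStates

open Matrix
open scoped MatrixOrder

variable {X B : Type*} [DecidableEq X]

lemma conjTranspose_cqState (w : X → ℝ) (A : X → Matrix B B ℂ) :
    (cqState w A)ᴴ = cqState w fun x => (A x)ᴴ := by
  ext ⟨x, i⟩ ⟨y, j⟩
  obtain rfl | hxy := eq_or_ne x y
  · simp [cqState]
  · simp [cqState, hxy, hxy.symm]

lemma one_sub_cqState [DecidableEq B] (A : X → Matrix B B ℂ) :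
    1 - cqState 1 A = cqState 1 (1 - A) := by
  ext ⟨x, i⟩ ⟨y, j⟩
  obtain rfl | hxy := eq_or_ne x y
  · simp [cqState, one_apply]
  · simp [cqState, hxy]

section Trace

variable [Fintype X] [Fintype B]

lemma cqState_mul_cqState (v w : X → ℝ) (A C : X → Matrix B B ℂ) :
    cqState v A * cqState w C = cqState (v * w) (A * C) := by
  ext ⟨x, i⟩ ⟨y, j⟩
  rw [mul_apply, Fintype.sum_prod_type, Finset.sum_eq_single x
    (fun z _ hz => by simp [cqState, hz.symm]) (fun hx => absurd (Finset.mem_univ x) hx)]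
  obtain rfl | hxy := eq_or_ne x y
  · simp [cqState, mul_apply, Finset.mul_sum, mul_mul_mul_comm]
  · simp [cqState, hxy]

lemma reTrace_cqState (w : X → ℝ) (A : X → Matrix B B ℂ) :
    reTrace (cqState w A) = ∑ x, w x * reTrace (A x) := by
  simp [reTrace_apply, trace, cqState, Fintype.sum_prod_type, Finset.mul_sum]

lemma reTrace_cqState_one_mul (w : X → ℝ) (A C : X → Matrix B B ℂ) :
    reTrace (cqState 1 A * cqState w C) = ∑ x, w x * reTrace (A x * C x) := by
  rw [cqState_mul_cqState, one_mul, reTrace_cqState]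
  rfl

end Trace

lemma cqState_one_nonneg [Finite X] [Finite B] {A : X → Matrix B B ℂ} (hA : ∀ x, 0 ≤ A x) :
    0 ≤ cqState 1 A := by
  classical
  have := Fintype.ofFinite X
  have := Fintype.ofFinite B
  choose C hC using fun x => CStarAlgebra.nonneg_iff_eq_star_mul_self.mp (hA x)
  have hsq : cqState 1 A = star (cqState 1 C) * cqState 1 C := by
    rw [star_eq_conjTranspose, conjTranspose_cqState, cqState_mul_cqState, one_mul]
    exact congrArg _ (funext hC)
  exact hsq ▸ star_mul_self_nonneg _

end CqStates

section Symmetrization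

open Matrix
open scoped MatrixOrder Nat

lemma factorial_inv_smul_sum_perm {κ E : Type*} [Fintype κ] [DecidableEq κ] [AddCommGroup E]
    [Module ℝ E] (v : E) : ((Fintype.card κ)! : ℝ)⁻¹ • ∑ _π : Equiv.Perm κ, v = v := by
  rw [Finset.sum_const, Finset.card_univ, Fintype.card_perm, ← Nat.cast_smul_eq_nsmul ℝ,
    inv_smul_smul₀ (by positivity)]

variable {κ X δ : Type*} [Fintype κ] [DecidableEq κ] [Fintype δ] [DecidableEq δ]

lemma permTensor_nonneg (π : Equiv.Perm κ) {A : Matrix (κ → δ) (κ → δ) ℂ} (hA : 0 ≤ A) :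
    0 ≤ permTensor π A :=
  nonneg_iff_posSemidef.mpr ((nonneg_iff_posSemidef.mp hA).submatrix _)

lemma trace_permTensor (π : Equiv.Perm κ) (A : Matrix (κ → δ) (κ → δ) ℂ) :
    (permTensor π A).trace = A.trace :=
  Equiv.sum_comp (π.arrowCongr (Equiv.refl δ)).symm fun i => A i i

lemma reTrace_permTensor_mul (π : Equiv.Perm κ) (A C : Matrix (κ → δ) (κ → δ) ℂ) :
    reTrace (permTensor π A * C) = reTrace (A * permTensor π⁻¹ C) := by
  have hinv : permTensor π (permTensor π⁻¹ C) = C := by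
    ext i j
    simp [permTensor_apply, Function.comp_assoc]
  rw [reTrace_apply, reTrace_apply, ← trace_permTensor π (A * _), map_mul (permTensor π), hinv]

/-- The average of a family of matrices over the simultaneous permutations of the tensor factors
and of the letters of the index word. -/
def symmetrize (T : (κ → X) → Matrix (κ → δ) (κ → δ) ℂ) (x : κ → X) :
    Matrix (κ → δ) (κ → δ) ℂ :=
  ((Fintype.card κ)! : ℝ)⁻¹ • ∑ π : Equiv.Perm κ, permTensor π (T (x ∘ π))

lemma symmetrize_nonneg {T : (κ → X) → Matrix (κ → δ) (κ → δ) ℂ} (hT : ∀ x, 0 ≤ T x)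
    (x : κ → X) : 0 ≤ symmetrize T x :=
  smul_nonneg (by positivity) (Finset.sum_nonneg fun π _ => permTensor_nonneg π (hT _))

lemma symmetrize_one_sub (T : (κ → X) → Matrix (κ → δ) (κ → δ) ℂ) :
    symmetrize (1 - T) = 1 - symmetrize T := by
  funext x
  simp only [symmetrize, Pi.sub_apply, Pi.one_apply, map_sub, map_one, Finset.sum_sub_distrib,
    smul_sub, factorial_inv_smul_sum_perm]

lemma symmetrize_le_one {T : (κ → X) → Matrix (κ → δ) (κ → δ) ℂ} (hT : ∀ x, T x ≤ 1) (x : κ → X) :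
    symmetrize T x ≤ 1 := by
  have hnonneg := symmetrize_nonneg (T := 1 - T) (fun y => sub_nonneg.mpr (hT y)) x
  rw [symmetrize_one_sub] at hnonneg
  exact sub_nonneg.mp hnonneg

lemma symmetrize_const_mem_colorInvariant {Y : Type*} (σ : Matrix (κ → δ) (κ → δ) ℂ) (c : κ → Y)
    (x : κ → X) : symmetrize (fun _ => σ) x ∈ colorInvariant δ c := fun π _ => by
  rw [symmetrize, RCLike.real_smul_eq_coe_smul (K := ℂ), map_smul, map_sum]
  exact congrArg _ (Fintype.sum_equiv (Equiv.mulLeft π) _ _ fun _ => rfl)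

lemma isDensity_symmetrize_const {σ : Matrix (κ → δ) (κ → δ) ℂ} (hσ : IsDensity σ) (x : κ → X) :
    IsDensity (symmetrize (fun _ => σ) x) := by
  refine ⟨nonneg_iff_posSemidef.mp (symmetrize_nonneg (fun _ => hσ.nonneg) x), ?_⟩
  simp only [symmetrize, trace_smul, trace_sum, trace_permTensor, factorial_inv_smul_sum_perm, hσ.2]

lemma sum_mul_reTrace_symmetrize_mul [Fintype X] {w : (κ → X) → ℝ}
    (hw : ∀ x (π : Equiv.Perm κ), w (x ∘ π) = w x)
    (T A : (κ → X) → Matrix (κ → δ) (κ → δ) ℂ) :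
    ∑ x, w x * reTrace (symmetrize T x * A x) = ∑ x, w x * reTrace (T x * symmetrize A x) := by
  have hterm (π : Equiv.Perm κ) : ∑ x, w x * reTrace (permTensor π (T (x ∘ π)) * A x) =
      ∑ x, w x * reTrace (T x * permTensor π⁻¹ (A (x ∘ ⇑π⁻¹))) := by
    refine Fintype.sum_equiv (π.symm.arrowCongr (Equiv.refl X)) _ _ fun x => ?_
    have hx : (x ∘ π) ∘ ⇑π⁻¹ = x := by
      funext k
      simp
    change _ = w (x ∘ π) * reTrace (T (x ∘ π) * permTensor π⁻¹ (A ((x ∘ π) ∘ ⇑π⁻¹)))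
    rw [hw, hx, reTrace_permTensor_mul]
  calc ∑ x, w x * reTrace (symmetrize T x * A x)
      = ((Fintype.card κ)! : ℝ)⁻¹ *
          ∑ π : Equiv.Perm κ, ∑ x, w x * reTrace (permTensor π (T (x ∘ π)) * A x) := by
        rw [Finset.sum_comm]
        simp only [symmetrize, smul_mul_assoc, Finset.sum_mul, map_smul, map_sum, smul_eq_mul,
          mul_left_comm, Finset.mul_sum]
    _ = ((Fintype.card κ)! : ℝ)⁻¹ *
          ∑ π : Equiv.Perm κ, ∑ x, w x * reTrace (T x * permTensor π (A (x ∘ π))) :=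
        congrArg _ (Fintype.sum_equiv (Equiv.inv _) _ _ hterm)
    _ = ∑ x, w x * reTrace (T x * symmetrize A x) := by
        rw [Finset.sum_comm]
        simp only [symmetrize, mul_smul_comm, Finset.mul_sum, map_smul, map_sum, smul_eq_mul,
          mul_left_comm]

lemma symmetrize_tensorFam {S : Type*} (A : X → S → Matrix δ δ ℂ) (s : κ → S) (x : κ → X) :
    symmetrize (fun x => tensorFam fun k => A (x k) (s k)) x =
      ((Fintype.card κ)! : ℝ)⁻¹ • ∑ π : Equiv.Perm κ, tensorFam fun k => A (x k) ((s ∘ π) k) := by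
  rw [symmetrize]
  congr 1
  refine Fintype.sum_equiv (Equiv.inv _) _ _ fun π => ?_
  refine Eq.trans ?_ (permTensor_tensorFam_comp π fun k => A (x k) (s (π⁻¹ k)))
  simp

end Symmetrization

section RenyiInformation

open Matrix
open scoped MatrixOrder

lemma mpow_le_one {m : Type*} [Fintype m] [DecidableEq m] {A : Matrix m m ℂ} (hA : 0 ≤ A)
    (hA1 : A ≤ 1) {p : ℝ} (hp : 0 < p) : mpow A p ≤ 1 := by
  obtain ⟨U, a, ha, rfl⟩ := exists_eq_diagConj hA
  rw [← map_one (diagConj U), diagConj_le_iff] at hA1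
  rw [mpow_diagConj U ha hp.ne', ← map_one (diagConj U), diagConj_le_iff]
  exact fun i => Real.rpow_le_one (ha i) (hA1 i) hp.le

lemma mpow_mpow_one_div {m : Type*} [Fintype m] [DecidableEq m] {A : Matrix m m ℂ} (hA : 0 ≤ A)
    {p : ℝ} (hp : p ≠ 0) : mpow (mpow A p) (1 / p) = A := by
  obtain ⟨U, a, ha, rfl⟩ := exists_eq_diagConj hA
  rw [mpow_diagConj U ha hp, mpow_diagConj U (fun i => Real.rpow_nonneg (ha i) p)
    (one_div_ne_zero hp)]
  congr 1
  funext i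
  rw [← Real.rpow_mul (ha i), mul_one_div_cancel hp, Real.rpow_one]

lemma IsDensity.le_one {m : Type*} [Fintype m] [DecidableEq m] {A : Matrix m m ℂ}
    (hA : IsDensity A) : A ≤ 1 := by
  simpa only [hA.reTrace_eq_one, one_smul] using le_reTrace_smul_one hA.nonneg

lemma isDensity_sum_smul {m ι : Type*} [Fintype m] {s : Finset ι} {w : ι → ℝ}
    (hw : ∀ i ∈ s, 0 ≤ w i) (hw1 : ∑ i ∈ s, w i = 1) {A : ι → Matrix m m ℂ}
    (hA : ∀ i ∈ s, IsDensity (A i)) : IsDensity (∑ i ∈ s, w i • A i) := by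
  refine ⟨nonneg_iff_posSemidef.mp
    (Finset.sum_nonneg fun i hi => smul_nonneg (hw i hi) (hA i hi).nonneg), ?_⟩
  rw [trace_sum, Finset.sum_congr rfl fun i hi => by rw [trace_smul, (hA i hi).2],
    ← Finset.sum_smul, hw1, one_smul]

lemma IsDensity.nonempty {m : Type*} [Fintype m] {A : Matrix m m ℂ} (hA : IsDensity A) :
    Nonempty m := by
  by_contra hm
  rw [not_nonempty_iff] at hm
  simpa [trace] using hA.2

variable {X : Type*} [Fintype X] {d : ℕ} {ω : X → Matrix (Fin d) (Fin d) ℂ} {t : ℝ}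

lemma nonempty_of_probVec (P : ProbVec X) : Nonempty X := by
  by_contra hX
  rw [not_nonempty_iff] at hX
  simpa using P.2.2

/-- The operator `∑ₓ P(x) ωₓ^{1-t}`, whose `1/(1-t)`-th power enters the Rényi information. -/
def averagePower (P : X → ℝ) (ω : X → Matrix (Fin d) (Fin d) ℂ) (t : ℝ) :
    Matrix (Fin d) (Fin d) ℂ :=
  ∑ x, P x • mpow (ω x) (1 - t)

lemma renyiI_eq (P : X → ℝ) (ω : X → Matrix (Fin d) (Fin d) ℂ) (t : ℝ) :
    renyiI P ω t =
      -((1 - t) / t) * Real.logb 2 (reTrace (mpow (averagePower P ω t) (1 / (1 - t)))) := rfl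

lemma averagePower_nonneg (P : ProbVec X) (hω : ∀ x, 0 ≤ ω x) (ht : t < 1) :
    0 ≤ averagePower P.1 ω t :=
  Finset.sum_nonneg fun x _ => smul_nonneg (P.2.1 x) (mpow_nonneg (hω x) (by linarith))

lemma averagePower_le_one (P : ProbVec X) (hω : ∀ x, 0 ≤ ω x) (hω1 : ∀ x, ω x ≤ 1) (ht : t < 1) :
    averagePower P.1 ω t ≤ 1 :=
  calc averagePower P.1 ω t ≤ ∑ x, P.1 x • (1 : Matrix (Fin d) (Fin d) ℂ) :=
        Finset.sum_le_sum fun x _ =>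
          smul_le_smul_of_nonneg_left (mpow_le_one (hω x) (hω1 x) (by linarith)) (P.2.1 x)
    _ = 1 := by rw [← Finset.sum_smul, P.2.2, one_smul]

lemma neg_mul_logb_le_renyiI (P : ProbVec X) (hω : ∀ x, IsDensity (ω x))
    (ht : t ∈ Set.Ioo (0 : ℝ) 1) : -((1 - t) / t) * Real.logb 2 d ≤ renyiI P.1 ω t := by
  have hp : 0 < 1 / (1 - t) := one_div_pos.mpr (sub_pos.mpr ht.2)
  have havg := averagePower_nonneg P (fun x => (hω x).nonneg) ht.2
  have hle := mpow_le_one havg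
    (averagePower_le_one P (fun x => (hω x).nonneg) (fun x => (hω x).le_one) ht.2) hp
  have htrace : reTrace (mpow (averagePower P.1 ω t) (1 / (1 - t))) ≤ d := by
    simpa [reTrace_apply] using reTrace_nonneg (sub_nonneg.mpr hle)
  have hd : 1 ≤ (d : ℝ) := by
    obtain ⟨x⟩ := nonempty_of_probVec P
    exact_mod_cast Fin.pos_iff_nonempty.mpr (hω x).nonempty
  have hlog : Real.logb 2 (reTrace (mpow (averagePower P.1 ω t) (1 / (1 - t)))) ≤
      Real.logb 2 d := by
    rcases (reTrace_nonneg (mpow_nonneg havg hp.ne')).eq_or_lt with hzero | hpos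
    · rw [← hzero, Real.logb_zero]
      exact Real.logb_nonneg one_lt_two hd
    · exact Real.logb_le_logb_of_le one_lt_two hpos htrace
  rw [renyiI_eq]
  exact mul_le_mul_of_nonpos_left hlog
    (neg_nonpos.mpr (div_nonneg (sub_nonneg.mpr ht.2.le) ht.1.le))

lemma renyiI_eq_zero_of_subsingleton [Subsingleton X] (P : ProbVec X) (hω : ∀ x, IsDensity (ω x))
    (ht : t < 1) : renyiI P.1 ω t = 0 := by
  obtain ⟨x⟩ := nonempty_of_probVec P
  have := uniqueOfSubsingleton x
  have hPx : P.1 default = 1 := by simpa using P.2.2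
  rw [renyiI_eq, averagePower, Fintype.sum_unique, hPx, one_smul,
    mpow_mpow_one_div (hω _).nonneg (by linarith), (hω _).reTrace_eq_one, Real.logb_one, mul_zero]

lemma sum_mul_reTrace_mul_mpow_tensorFam {n : ℕ} (P : X → ℝ) (hω : ∀ x, 0 ≤ ω x) (ht : t < 1)
    (B : Matrix (Fin n → Fin d) (Fin n → Fin d) ℂ) :
    ∑ x : Fin n → X, (∏ k, P (x k)) * reTrace (B * mpow (tensorFam fun k => ω (x k)) (1 - t)) =
      reTrace (B * tensorFam fun _ : Fin n => averagePower P ω t) := by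
  have hexpand : (tensorFam fun _ : Fin n => averagePower P ω t) = ∑ x : Fin n → X,
      (∏ k, P (x k)) • mpow (tensorFam fun k => ω (x k)) (1 - t) := by
    simp only [averagePower]
    rw [tensorFam_sum_smul P fun (_ : Fin n) x => mpow (ω x) (1 - t)]
    exact Finset.sum_congr rfl fun x _ =>
      congrArg _ (mpow_tensorFam (fun k => hω (x k)) (by linarith)).symm
  simp only [hexpand, Finset.mul_sum, map_sum, mul_smul_comm, map_smul, smul_eq_mul]

lemma pow_reTrace_mpow_averagePower_le (n : ℕ) (P : ProbVec X) (hω : ∀ x, 0 ≤ ω x)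
    (ht : t ∈ Set.Ioo (0 : ℝ) 1) :
    (reTrace (mpow (averagePower P.1 ω t) (1 / (1 - t))) ^ n) ^ (1 - t) ≤
      (2 : ℝ) ^ (-(n * t * renyiI P.1 ω t)) := by
  have ht0 : t ≠ 0 := ht.1.ne'
  have ht1 : 0 < 1 - t := sub_pos.mpr ht.2
  have hnonneg := reTrace_nonneg
    (mpow_nonneg (averagePower_nonneg P hω ht.2) (one_div_ne_zero ht1.ne'))
  rw [renyiI_eq]
  generalize reTrace (mpow (averagePower P.1 ω t) (1 / (1 - t))) = τ at hnonneg ⊢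
  rcases hnonneg.eq_or_lt with rfl | hpos
  · rw [Real.logb_zero, mul_zero, mul_zero, neg_zero, Real.rpow_zero]
    exact Real.rpow_le_one (by positivity) (pow_le_one₀ le_rfl zero_le_one) ht1.le
  · have hexp : -(n * t * (-((1 - t) / t) * Real.logb 2 τ)) = Real.logb 2 τ * (n * (1 - t)) := by
      field_simp
    rw [hexp, Real.rpow_mul zero_le_two, Real.rpow_logb two_pos (by norm_num) hpos,
      Real.rpow_mul hpos.le, Real.rpow_natCast]

lemma sum_mul_reTrace_mpow_mul_mpow_tensorFam_le {n : ℕ} (P : ProbVec X) (hω : ∀ x, 0 ≤ ω x)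
    (ht : t ∈ Set.Ioo (0 : ℝ) 1) {σ : Matrix (Fin n → Fin d) (Fin n → Fin d) ℂ} (hσ : 0 ≤ σ) :
    ∑ x : Fin n → X, (∏ k, P.1 (x k)) *
        reTrace (mpow σ t * mpow (tensorFam fun k => ω (x k)) (1 - t)) ≤
      reTrace σ ^ t * (2 : ℝ) ^ (-(n * t * renyiI P.1 ω t)) := by
  have havg := averagePower_nonneg P hω ht.2
  have hp : 1 / (1 - t) ≠ 0 := one_div_ne_zero (sub_pos.mpr ht.2).ne'
  have hpow : reTrace (mpow (tensorFam fun _ : Fin n => averagePower P.1 ω t) (1 / (1 - t))) =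
      reTrace (mpow (averagePower P.1 ω t) (1 / (1 - t))) ^ n := by
    rw [mpow_tensorFam (fun _ => havg) hp, reTrace_tensorFam fun _ => mpow_nonneg havg hp,
      Finset.prod_const, Finset.card_univ, Fintype.card_fin]
  rw [sum_mul_reTrace_mul_mpow_tensorFam P.1 hω ht.2]
  refine (reTrace_mpow_mul_le hσ (tensorFam_nonneg fun _ => havg) ht).trans ?_
  rw [hpow]
  exact mul_le_mul_of_nonneg_left (pow_reTrace_mpow_averagePower_le n P hω ht)
    (Real.rpow_nonneg (reTrace_nonneg hσ) t)

end RenyiInformation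

section UniversalTest

open Matrix
open scoped MatrixOrder

variable {X : Type*} [Fintype X] {n d : ℕ}

/-- A family of tests, indexed by the classical words, of rate `R`. The type I error is bounded
for every memoryless channel `ω` and every input distribution `P`, the type II error for every
permutation-invariant output state. -/
structure IsUniversalTest (R : ℝ)
    (T : (Fin n → X) → Matrix (Fin n → Fin d) (Fin n → Fin d) ℂ) : Prop where
  nonneg : ∀ x, 0 ≤ T x
  le_one : ∀ x, T x ≤ 1
  typeI_le : ∀ (P : ProbVec X) {ω : X → Matrix (Fin d) (Fin d) ℂ}, (∀ x, IsDensity (ω x)) →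
    ∀ {t : ℝ}, t ∈ Set.Ioo (0 : ℝ) 1 →
    ∑ x : Fin n → X, (∏ k, P.1 (x k)) * reTrace ((1 - T x) * tensorFam fun k => ω (x k)) ≤
      (((n : ℝ) + 1) ^ (Fintype.card X * (d - 1 + d.choose 2))) ^ t *
        (2 : ℝ) ^ (n * t * (R - renyiI P.1 ω t))
  typeII_le : ∀ x, ∀ σ ∈ colorInvariant (Fin d) (fun _ : Fin n => ()), IsDensity σ →
    reTrace (T x * σ) ≤ n ^ d.choose 2 * numPartLe n d * (2 : ℝ) ^ (-n * R)

lemma sum_prod_probVec (P : ProbVec X) (n : ℕ) : ∑ x : Fin n → X, ∏ k, P.1 (x k) = 1 := by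
  rw [← Fintype.sum_pow, P.2.2, one_pow]

lemma sum_mul_reTrace_one_sub_likelihoodTest_mul_le (P : ProbVec X)
    {ω : X → Matrix (Fin d) (Fin d) ℂ} (hω : ∀ x, 0 ≤ ω x) {t : ℝ} (ht : t ∈ Set.Ioo (0 : ℝ) 1)
    {σ : (Fin n → X) → Matrix (Fin n → Fin d) (Fin n → Fin d) ℂ} (hσ : ∀ x, (σ x).PosDef)
    {τ : Matrix (Fin n → Fin d) (Fin n → Fin d) ℂ} (hτ : 0 ≤ τ) (hστ : ∀ x, Commute (σ x) τ)
    (hωσ : ∀ x, tensorFam (fun k => ω (x k)) ≤ σ x)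
    (hσω : ∀ x, Commute (σ x) (tensorFam fun k => ω (x k))) {c : ℝ} (hc : 0 ≤ c) :
    ∑ x : Fin n → X, (∏ k, P.1 (x k)) *
        reTrace ((1 - likelihoodTest c (σ x) τ) * tensorFam fun k => ω (x k)) ≤
      (c * reTrace τ) ^ t * (2 : ℝ) ^ (-(n * t * renyiI P.1 ω t)) := by
  calc ∑ x : Fin n → X, (∏ k, P.1 (x k)) *
        reTrace ((1 - likelihoodTest c (σ x) τ) * tensorFam fun k => ω (x k))
      ≤ ∑ x : Fin n → X, (∏ k, P.1 (x k)) *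
          (c ^ t * reTrace (mpow τ t * mpow (tensorFam fun k => ω (x k)) (1 - t))) :=
        Finset.sum_le_sum fun x _ => mul_le_mul_of_nonneg_left
          (reTrace_one_sub_likelihoodTest_mul_le (hσ x) hτ (hστ x) hc ht
            (tensorFam_nonneg fun k => hω (x k)) (hωσ x) (hσω x))
          (Finset.prod_nonneg fun k _ => P.2.1 (x k))
    _ = c ^ t * ∑ x : Fin n → X, (∏ k, P.1 (x k)) *
          reTrace (mpow τ t * mpow (tensorFam fun k => ω (x k)) (1 - t)) := by
        simp only [Finset.mul_sum, mul_left_comm]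
    _ ≤ c ^ t * (reTrace τ ^ t * (2 : ℝ) ^ (-(n * t * renyiI P.1 ω t))) :=
        mul_le_mul_of_nonneg_left (sum_mul_reTrace_mpow_mul_mpow_tensorFam_le P hω ht hτ)
          (Real.rpow_nonneg hc t)
    _ = (c * reTrace τ) ^ t * (2 : ℝ) ^ (-(n * t * renyiI P.1 ω t)) := by
        rw [Real.mul_rpow hc (reTrace_nonneg hτ)]
        ring

lemma rpow_mul_two_rpow_le {a M R I t n : ℝ} (ha : 0 ≤ a) (hM : 0 ≤ M) (ht : 0 ≤ t)
    (haM : a ≤ M * 2 ^ (n * R)) :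
    a ^ t * (2 : ℝ) ^ (-(n * t * I)) ≤ M ^ t * 2 ^ (n * t * (R - I)) := by
  calc a ^ t * (2 : ℝ) ^ (-(n * t * I)) ≤ (M * 2 ^ (n * R)) ^ t * 2 ^ (-(n * t * I)) := by gcongr
    _ = M ^ t * 2 ^ (n * t * (R - I)) := by
        rw [Real.mul_rpow hM (by positivity), ← Real.rpow_mul zero_le_two, mul_assoc,
          ← Real.rpow_add two_pos]
        ring_nf

/-- The likelihood-ratio threshold of the universal test of rate `R`. It balances the traces of
the universal operators, which are bounded by `triangularMonomials`, in the two error bounds. -/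
def universalThreshold (X : Type*) [Fintype X] (n d : ℕ) (R : ℝ) : ℝ :=
  ((n : ℝ) + 1) ^ (Fintype.card X * (d - 1 + d.choose 2)) * (2 : ℝ) ^ (n * R) /
    triangularMonomials d n

lemma universalThreshold_pos (hd : 0 < d) (R : ℝ) : 0 < universalThreshold X n d R := by
  have := triangularMonomials_pos hd n
  rw [universalThreshold]
  positivity

lemma universalThreshold_mul_triangularMonomials (hd : 0 < d) (R : ℝ) :
    universalThreshold X n d R * triangularMonomials d n =
      ((n : ℝ) + 1) ^ (Fintype.card X * (d - 1 + d.choose 2)) * (2 : ℝ) ^ (n * R) :=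
  div_mul_cancel₀ _ (mod_cast (triangularMonomials_pos hd n).ne')

lemma prod_triangularMonomials_div_universalThreshold_le (hX : 2 ≤ Fintype.card X) (hn : 1 ≤ n)
    (hd : 0 < d) (R : ℝ) {m : X → ℕ} (hm : ∑ y, m y = n) :
    (∏ y, (triangularMonomials d (m y) : ℝ)) / universalThreshold X n d R ≤
      n ^ d.choose 2 * numPartLe n d * (2 : ℝ) ^ (-n * R) := by
  have := triangularMonomials_pos hd n
  have hcount : (triangularMonomials d n : ℝ) * ∏ y, (triangularMonomials d (m y) : ℝ) ≤
      n ^ d.choose 2 * numPartLe n d *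
        ((n : ℝ) + 1) ^ (Fintype.card X * (d - 1 + d.choose 2)) := by
    exact_mod_cast triangularMonomials_mul_prod_le hX hn hd hm
  rw [universalThreshold, div_div_eq_mul_div, neg_mul, Real.rpow_neg zero_le_two, mul_comm]
  refine div_le_of_le_mul₀ (by positivity) (by positivity) (hcount.trans_eq ?_)
  field_simp

lemma exists_isUniversalTest_of_two_le_card (hX : 2 ≤ Fintype.card X) (hn : 1 ≤ n) (hd : 0 < d)
    (R : ℝ) :
    ∃ T : (Fin n → X) → Matrix (Fin n → Fin d) (Fin n → Fin d) ℂ, IsUniversalTest R T := by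
  classical
  obtain ⟨τ, hτmem, hτpos, -, hτtrace, hτuniv⟩ :=
    exists_colorInvariant_universal d (fun _ : Fin n => ())
  choose σ _ hσpos hσcomm hσtrace hσuniv using
    fun x : Fin n → X => exists_colorInvariant_universal d x
  have hτ : 0 ≤ τ := hτpos.posSemidef.nonneg
  have hστ (x : Fin n → X) : Commute (σ x) τ := (hσcomm x τ fun π _ => hτmem π rfl).symm
  have hfiber : fiberCard (fun _ : Fin n => ()) () = n := by simp [fiberCard]
  simp only [Finset.univ_unique, Finset.prod_singleton, PUnit.default_eq_unit, hfiber] at hτtrace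
  have hc : 0 < universalThreshold X n d R := universalThreshold_pos hd R
  refine ⟨fun x => likelihoodTest (universalThreshold X n d R) (σ x) τ,
    fun x => likelihoodTest_nonneg (hσpos x) hτ (hστ x) hc.le,
    fun x => likelihoodTest_le_one (hσpos x) hτ (hστ x) hc.le, fun P ω hω t ht => ?_,
    fun x ν hν hνdens => ?_⟩
  · have hmem (x : Fin n → X) := tensorFam_mem_colorInvariant x ω
    have hle (x : Fin n → X) : tensorFam (fun k => ω (x k)) ≤ σ x :=
      hσuniv x _ (hmem x) (isDensity_tensorFam fun k => hω (x k))
    refine (sum_mul_reTrace_one_sub_likelihoodTest_mul_le P (fun x => (hω x).nonneg) ht hσpos hτ hστ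
      hle (fun x => (hσcomm x _ (hmem x)).symm) hc.le).trans ?_
    refine rpow_mul_two_rpow_le (mul_nonneg hc.le (reTrace_nonneg hτ)) (by positivity) ht.1.le ?_
    rw [← universalThreshold_mul_triangularMonomials hd R]
    exact mul_le_mul_of_nonneg_left hτtrace hc.le
  · calc reTrace (likelihoodTest (universalThreshold X n d R) (σ x) τ * ν)
        ≤ reTrace (likelihoodTest (universalThreshold X n d R) (σ x) τ * τ) :=
          reTrace_mul_le_mul_left (likelihoodTest_nonneg (hσpos x) hτ (hστ x) hc.le)
            (hτuniv ν hν hνdens)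
      _ ≤ reTrace (σ x) / universalThreshold X n d R :=
          reTrace_likelihoodTest_mul_le (hσpos x) hτ (hστ x) hc
      _ ≤ (∏ y, (triangularMonomials d (fiberCard x y) : ℝ)) / universalThreshold X n d R :=
          div_le_div_of_nonneg_right (hσtrace x) hc.le
      _ ≤ n ^ d.choose 2 * numPartLe n d * (2 : ℝ) ^ (-n * R) :=
          prod_triangularMonomials_div_universalThreshold_le hX hn hd R
            ((sum_fiberCard x).trans (Fintype.card_fin n))

lemma one_sub_min_two_rpow_le {a t R : ℝ} (ha : 0 ≤ a) (ht : 0 ≤ t) :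
    1 - min 1 ((2 : ℝ) ^ (-a * R)) ≤ 2 ^ (a * t * R) := by
  rcases le_total 0 R with hR | hR
  · have hone : (1 : ℝ) ≤ 2 ^ (a * t * R) := Real.one_le_rpow one_le_two (by positivity)
    have hmin : 0 ≤ min 1 ((2 : ℝ) ^ (-a * R)) := by positivity
    linarith
  · rw [min_eq_left (Real.one_le_rpow one_le_two (by nlinarith)), sub_self]
    positivity

lemma isUniversalTest_const_of_subsingleton [Subsingleton X] (hd : 0 < d) (hn : 1 ≤ n) (R : ℝ) :
    IsUniversalTest (X := X) (n := n) (d := d) R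
      fun _ => min 1 ((2 : ℝ) ^ (-n * R)) • 1 := by
  have hmin : 0 ≤ min 1 ((2 : ℝ) ^ (-n * R)) := by positivity
  refine ⟨fun _ => smul_nonneg hmin zero_le_one, fun _ => ?_, fun P ω hω t ht => ?_,
    fun _ σ _ hσ => ?_⟩
  · simpa only [one_smul] using smul_le_smul_of_nonneg_right (min_le_left 1 ((2 : ℝ) ^ (-n * R)))
      (zero_le_one (α := Matrix (Fin n → Fin d) (Fin n → Fin d) ℂ))
  · have hbase : (1 : ℝ) ≤ (((n : ℝ) + 1) ^ (Fintype.card X * (d - 1 + d.choose 2))) ^ t :=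
      Real.one_le_rpow (one_le_pow₀ (by linarith [n.cast_nonneg (α := ℝ)])) ht.1.le
    have hterm (x : Fin n → X) :
        reTrace ((1 - min 1 ((2 : ℝ) ^ (-n * R)) • 1) * tensorFam fun k => ω (x k)) =
          1 - min 1 ((2 : ℝ) ^ (-n * R)) := by
      rw [sub_mul, one_mul, smul_one_mul, map_sub, map_smul,
        (isDensity_tensorFam fun k => hω (x k)).reTrace_eq_one, smul_eq_mul, mul_one]
    simp only [hterm]
    rw [← Finset.sum_mul, sum_prod_probVec, one_mul, renyiI_eq_zero_of_subsingleton P hω ht.2,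
      sub_zero]
    exact (one_sub_min_two_rpow_le n.cast_nonneg ht.1.le).trans
      (le_mul_of_one_le_left (by positivity) hbase)
  · have hnum : (1 : ℝ) ≤ n ^ d.choose 2 * numPartLe n d := by
      exact_mod_cast Nat.mul_pos (pow_pos hn _) (numPartLe_pos hd n)
    rw [smul_one_mul, map_smul, hσ.reTrace_eq_one, smul_eq_mul, mul_one]
    exact (min_le_right _ _).trans (le_mul_of_one_le_left (by positivity) hnum)

lemma exists_isUniversalTest (X : Type*) [Fintype X] (hn : 1 ≤ n) (d : ℕ) (R : ℝ) :
    ∃ T : (Fin n → X) → Matrix (Fin n → Fin d) (Fin n → Fin d) ℂ, IsUniversalTest R T := by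
  obtain rfl | hd := d.eq_zero_or_pos
  · refine ⟨0, fun _ => le_rfl, fun _ => zero_le_one, fun P ω hω => ?_, fun x σ _ hσ => ?_⟩
    · obtain ⟨x⟩ := nonempty_of_probVec P
      exact (IsEmpty.false (hω x).nonempty.some).elim
    · exact (IsEmpty.false (hσ.nonempty.some ⟨0, hn⟩)).elim
  · rcases Nat.lt_or_ge 1 (Fintype.card X) with hX | hX
    · exact exists_isUniversalTest_of_two_le_card hX hn hd R
    · have := Fintype.card_le_one_iff_subsingleton.mp hX
      exact ⟨_, isUniversalTest_const_of_subsingleton hd hn R⟩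

end UniversalTest

section EmpiricalDistribution

open Matrix
open scoped MatrixOrder Nat

variable {κ S : Type*} [Fintype κ] [Nonempty κ] [Fintype S] [DecidableEq S]

/-- The type (empirical distribution) of the word `s`. -/
def empiricalDist (s : κ → S) : ProbVec S :=
  ⟨fun a => fiberCard s a / Fintype.card κ, fun _ => by positivity, by
    rw [← Finset.sum_div, ← Nat.cast_sum, sum_fiberCard,
      div_self (mod_cast Fintype.card_ne_zero)]⟩

variable [DecidableEq κ] {X δ : Type*} [Fintype δ] [DecidableEq δ]

lemma reTrace_mul_symmetrize_tensorFam_le {D : Matrix (κ → δ) (κ → δ) ℂ} (hD : 0 ≤ D)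
    {A : X → S → Matrix δ δ ℂ} (hA : ∀ y a, 0 ≤ A y a) (s : κ → S) (x : κ → X) :
    reTrace (D * symmetrize (fun x => tensorFam fun k => A (x k) (s k)) x) ≤
      ((Fintype.card κ : ℝ) + 1) ^ (Fintype.card S - 1) *
        reTrace (D * tensorFam fun k => ∑ a, (empiricalDist s).1 a • A (x k) a) := by
  let g (s' : κ → S) : ℝ := reTrace (D * tensorFam fun k => A (x k) (s' k))
  have hg : 0 ≤ g := fun s' => reTrace_mul_nonneg hD (tensorFam_nonneg fun k => hA (x k) (s' k))
  calc reTrace (D * symmetrize (fun x => tensorFam fun k => A (x k) (s k)) x)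
      = ((Fintype.card κ)! : ℝ)⁻¹ * ∑ π : Equiv.Perm κ, g (s ∘ π) := by
        rw [symmetrize_tensorFam, mul_smul_comm, Finset.mul_sum, map_smul, map_sum, smul_eq_mul]
    _ ≤ ((Fintype.card κ)! : ℝ)⁻¹ *
          ((Fintype.card κ)! * ((Fintype.card κ : ℝ) + 1) ^ (Fintype.card S - 1) *
            ∑ s' : κ → S, (∏ k, (empiricalDist s).1 (s' k)) * g s') :=
        mul_le_mul_of_nonneg_left (sum_perm_comp_le s hg) (by positivity)
    _ = ((Fintype.card κ : ℝ) + 1) ^ (Fintype.card S - 1) *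
          ∑ s' : κ → S, (∏ k, (empiricalDist s).1 (s' k)) * g s' := by
        field_simp
    _ = _ := by
        rw [tensorFam_sum_smul, Matrix.mul_sum, map_sum]
        simp only [mul_smul_comm, map_smul, smul_eq_mul, g]

end EmpiricalDistribution

section CompositeHypotheses

open Matrix
open scoped MatrixOrder

lemma sum_mul_reTrace_mul_tensorFam_le_of_le_smul {ι κ δ : Type*} [Fintype κ] [DecidableEq κ]
    [Fintype δ] {I : Finset ι} {w : ι → ℝ} (hw : ∀ i ∈ I, 0 ≤ w i)
    {D : ι → Matrix (κ → δ) (κ → δ) ℂ} (hD : ∀ i ∈ I, 0 ≤ D i) {A B : ι → κ → Matrix δ δ ℂ}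
    (hA : ∀ i ∈ I, ∀ k, 0 ≤ A i k) {c : ℝ} (hAB : ∀ i ∈ I, ∀ k, A i k ≤ c • B i k) :
    ∑ i ∈ I, w i * reTrace (D i * tensorFam (A i)) ≤
      c ^ Fintype.card κ * ∑ i ∈ I, w i * reTrace (D i * tensorFam (B i)) := by
  rw [Finset.mul_sum]
  refine Finset.sum_le_sum fun i hi => ?_
  refine (mul_le_mul_of_nonneg_left (reTrace_mul_le_mul_left (hD i hi)
    (tensorFam_mono (hA i hi) (hAB i hi))) (hw i hi)).trans_eq ?_
  rw [tensorFam_smul (fun _ => c), mul_smul_comm, map_smul, Finset.prod_const, Finset.card_univ,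
    smul_eq_mul, mul_left_comm]

variable {X : Type*} [Fintype X] {n d : ℕ} {R : ℝ}
  {T : (Fin n → X) → Matrix (Fin n → Fin d) (Fin n → Fin d) ℂ}

namespace IsUniversalTest

lemma sum_mul_reTrace_symmetrize_mul_le (hT : IsUniversalTest R T) (P : ProbVec X)
    {σ : Matrix (Fin n → Fin d) (Fin n → Fin d) ℂ} (hσ : IsDensity σ) :
    ∑ x : Fin n → X, (∏ k, P.1 (x k)) * reTrace (symmetrize T x * σ) ≤
      n ^ d.choose 2 * numPartLe n d * (2 : ℝ) ^ (-n * R) := by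
  rw [sum_mul_reTrace_symmetrize_mul (fun x π => Equiv.prod_comp π fun k => P.1 (x k)) T fun _ => σ]
  calc ∑ x : Fin n → X, (∏ k, P.1 (x k)) * reTrace (T x * symmetrize (fun _ => σ) x)
      ≤ ∑ x : Fin n → X, (∏ k, P.1 (x k)) *
          (n ^ d.choose 2 * numPartLe n d * (2 : ℝ) ^ (-n * R)) :=
        Finset.sum_le_sum fun x _ => mul_le_mul_of_nonneg_left
          (hT.typeII_le x _ (symmetrize_const_mem_colorInvariant σ _ x)
            (isDensity_symmetrize_const hσ x))
          (Finset.prod_nonneg fun k _ => P.2.1 (x k))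
    _ = n ^ d.choose 2 * numPartLe n d * (2 : ℝ) ^ (-n * R) := by
        rw [← Finset.sum_mul, sum_prod_probVec, one_mul]

lemma sum_mul_reTrace_one_sub_symmetrize_mul_le [NeZero n] {S : Type*} [Fintype S]
    [DecidableEq S] (hT : IsUniversalTest R T) (P : ProbVec X)
    {A : X → S → Matrix (Fin d) (Fin d) ℂ} (hA : ∀ y a, IsDensity (A y a)) (s : Fin n → S) {t : ℝ}
    (ht : t ∈ Set.Ioo (0 : ℝ) 1) :
    ∑ x : Fin n → X, (∏ k, P.1 (x k)) *
        reTrace ((1 - symmetrize T x) * tensorFam fun k => A (x k) (s k)) ≤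
      ((n : ℝ) + 1) ^ (Fintype.card S - 1) *
        ((((n : ℝ) + 1) ^ (Fintype.card X * (d - 1 + d.choose 2))) ^ t *
          (2 : ℝ) ^ (n * t *
            (R - renyiI P.1 (fun y => ∑ a, (empiricalDist s).1 a • A y a) t))) := by
  calc ∑ x : Fin n → X, (∏ k, P.1 (x k)) *
        reTrace ((1 - symmetrize T x) * tensorFam fun k => A (x k) (s k))
      = ∑ x : Fin n → X, (∏ k, P.1 (x k)) * reTrace ((1 - T x) *
          symmetrize (fun x => tensorFam fun k => A (x k) (s k)) x) := by
        have hsymm := sum_mul_reTrace_symmetrize_mul (w := fun x => ∏ k, P.1 (x k))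
          (fun x π => Equiv.prod_comp π fun k => P.1 (x k)) (1 - T)
          fun x : Fin n → X => tensorFam fun k => A (x k) (s k)
        rwa [symmetrize_one_sub] at hsymm
    _ ≤ ∑ x : Fin n → X, (∏ k, P.1 (x k)) * (((n : ℝ) + 1) ^ (Fintype.card S - 1) *
          reTrace ((1 - T x) *
            tensorFam fun k => ∑ a, (empiricalDist s).1 a • A (x k) a)) := by
        refine Finset.sum_le_sum fun x _ => mul_le_mul_of_nonneg_left ?_
          (Finset.prod_nonneg fun k _ => P.2.1 (x k))
        simpa only [Fintype.card_fin] using reTrace_mul_symmetrize_tensorFam_le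
          (sub_nonneg.mpr (hT.le_one x)) (fun y a => (hA y a).nonneg) s x
    _ = ((n : ℝ) + 1) ^ (Fintype.card S - 1) * ∑ x : Fin n → X, (∏ k, P.1 (x k)) *
          reTrace ((1 - T x) *
            tensorFam fun k => ∑ a, (empiricalDist s).1 a • A (x k) a) := by
        simp only [Finset.mul_sum, mul_left_comm]
    _ ≤ _ := mul_le_mul_of_nonneg_left
        (hT.typeI_le P (fun y => isDensity_sum_smul (fun a _ => (empiricalDist s).2.1 a)
          (empiricalDist s).2.2 fun a _ => hA y a) ht) (by positivity)

end IsUniversalTest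

lemma iInf_renyiI_le {S : Type*} (P : ProbVec X) {ρ : X → S → Matrix (Fin d) (Fin d) ℂ}
    (hρ : ∀ x s, IsDensity (ρ x s)) {t : ℝ} (ht : t ∈ Set.Ioo (0 : ℝ) 1) {F : Finset S}
    (Q : ProbVec F) :
    ⨅ Q : {Q : S → ℝ // (∀ s, 0 ≤ Q s) ∧ (∀ s ∉ F, Q s = 0) ∧ ∑ s ∈ F, Q s = 1},
        renyiI P.1 (fun x => ∑ s ∈ F, Q.1 s • ρ x s) t ≤
      renyiI P.1 (fun x => ∑ s : F, Q.1 s • ρ x s) t := by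
  classical
  let Q₀ (s : S) : ℝ := if hs : s ∈ F then Q.1 ⟨s, hs⟩ else 0
  have hQ₀ (s : F) : Q₀ s = Q.1 s := dif_pos s.2
  have hmix (x : X) : ∑ s ∈ F, Q₀ s • ρ x s = ∑ s : F, Q.1 s • ρ x s := by
    simp only [← Finset.sum_coe_sort F, hQ₀]
  have hsum : ∑ s ∈ F, Q₀ s = 1 := by
    simp only [← Finset.sum_coe_sort F, hQ₀, Q.2.2]
  simp only [← hmix]
  refine ciInf_le (f := fun Q : {Q : S → ℝ // (∀ s, 0 ≤ Q s) ∧ (∀ s ∉ F, Q s = 0) ∧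
    ∑ s ∈ F, Q s = 1} => renyiI P.1 (fun x => ∑ s ∈ F, Q.1 s • ρ x s) t) ?_
    ⟨Q₀, fun s => ?_, fun s hs => dif_neg hs, hsum⟩
  · exact ⟨_, Set.forall_mem_range.mpr fun Q => neg_mul_logb_le_renyiI P
      (fun x => isDensity_sum_smul (fun s _ => Q.2.1 s) Q.2.2.2 fun s _ => hρ x s) ht⟩
  · by_cases hs : s ∈ F
    · exact (hQ₀ ⟨s, hs⟩).symm ▸ Q.2.1 _
    · exact (dif_neg hs : Q₀ s = 0).ge

lemma pow_mul_pow_rpow_eq {a t : ℝ} (ha : 0 < a) {N d : ℕ} (hN : 0 < N) (hd : 0 < d) (K : ℕ) :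
    a ^ (N - 1) * (a ^ (K * (d - 1 + d.choose 2))) ^ t =
      a ^ ((N : ℝ) - 1 + t * K * ((d : ℝ) - 1) * d / 2 + ((d : ℝ) - 1) * K * t) := by
  rw [← Real.rpow_natCast, ← Real.rpow_natCast, ← Real.rpow_mul ha.le, ← Real.rpow_add ha]
  push_cast [Nat.cast_choose_two, Nat.cast_sub (Nat.one_le_of_lt hN),
    Nat.cast_sub (Nat.one_le_of_lt hd)]
  congr 1
  ring

lemma IsUniversalTest.sum_mul_reTrace_one_sub_symmetrize_mul_le_of_cover (hT : IsUniversalTest R T)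
    (hn : 1 ≤ n) (P : ProbVec X) {S : Type*} {ρ : X → S → Matrix (Fin d) (Fin d) ℂ}
    (hρ : ∀ x s, IsDensity (ρ x s)) {t : ℝ} (ht : t ∈ Set.Ioo (0 : ℝ) 1) {c : ℝ} (hc : 0 ≤ c)
    {F : Finset S} (hF : ∀ s, ∃ s' ∈ F, ∀ x, ρ x s ≤ c • ρ x s') (s : Fin n → S) :
    ∑ x : Fin n → X, (∏ k, P.1 (x k)) *
        reTrace ((1 - symmetrize T x) * tensorFam fun k => ρ (x k) (s k)) ≤
      ((n : ℝ) + 1) ^ (((F.card : ℝ) - 1) + t * (Fintype.card X) * ((d : ℝ) - 1) * (d : ℝ) / 2 +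
          ((d : ℝ) - 1) * (Fintype.card X) * t) * c ^ n *
        (2 : ℝ) ^ ((n : ℝ) * t *
          (R - ⨅ Q : {Q : S → ℝ // (∀ s, 0 ≤ Q s) ∧ (∀ s ∉ F, Q s = 0) ∧ ∑ s ∈ F, Q s = 1},
            renyiI P.1 (fun x => ∑ s ∈ F, Q.1 s • ρ x s) t)) := by
  classical
  have : NeZero n := ⟨Nat.one_le_iff_ne_zero.mp hn⟩
  choose r hrF hr using hF
  let s' (k : Fin n) : F := ⟨r (s k), hrF _⟩
  have hFcard : 0 < F.card := Finset.card_pos.mpr ⟨_, (s' 0).2⟩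
  obtain ⟨y⟩ := nonempty_of_probVec P
  have hd : 0 < d := Fin.pos_iff_nonempty.mpr (hρ y (s 0)).nonempty
  have hcover := sum_mul_reTrace_mul_tensorFam_le_of_le_smul (I := Finset.univ)
    (w := fun x : Fin n → X => ∏ k, P.1 (x k))
    (fun x _ => Finset.prod_nonneg fun k _ => P.2.1 (x k))
    (fun x _ => sub_nonneg.mpr (symmetrize_le_one hT.le_one x))
    (fun x _ k => (hρ (x k) (s k)).nonneg) (fun x _ k => hr (s k) (x k))
  rw [Fintype.card_fin] at hcover
  have hfin := hT.sum_mul_reTrace_one_sub_symmetrize_mul_le P (fun y (a : F) => hρ y a) s' ht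
  have hinf := iInf_renyiI_le P hρ ht (empiricalDist s')
  rw [Fintype.card_coe, ← mul_assoc,
    pow_mul_pow_rpow_eq n.cast_add_one_pos hFcard hd (Fintype.card X)] at hfin
  refine hcover.trans ((mul_le_mul_of_nonneg_left hfin (pow_nonneg hc n)).trans ?_)
  rw [mul_left_comm, ← mul_assoc]
  have := ht.1
  gcongr
  exact one_le_two

end CompositeHypotheses

open scoped MatrixOrder in
theorem statement3_general {𝒳 : Type*} [Fintype 𝒳] [DecidableEq 𝒳] (d n : ℕ) (hn : 1 ≤ n)
    (Rhat : ℝ) :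
    ∃ T : Matrix ((Fin n → 𝒳) × (Fin n → Fin d)) ((Fin n → 𝒳) × (Fin n → Fin d)) ℂ,
      T.PosSemidef ∧ (1 - T).PosSemidef ∧
      ∀ P : 𝒳 → ℝ, (∀ x, 0 ≤ P x) → (∑ x, P x = 1) →
      (∀ {𝒮 : Type*} {ρ : 𝒳 → 𝒮 → Matrix (Fin d) (Fin d) ℂ}, (∀ x s, IsDensity (ρ x s)) →
        ∀ t : ℝ, t ∈ Set.Ioo (0 : ℝ) 1 →
        ∀ ε : ℝ, 0 < ε →
        ∀ Sε : Finset 𝒮,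
          (∀ s : 𝒮, ∃ s' ∈ Sε, ∀ x : 𝒳, Loewner (ρ x s) ((1 + ε) • ρ x s')) →
          ∀ sv : Fin n → 𝒮,
            (Matrix.trace ((1 - T) *
              cqState (fun xv : Fin n → 𝒳 => ∏ k, P (xv k))
                (fun xv => tensorFam fun k => ρ (xv k) (sv k)))).re ≤
              ((n : ℝ) + 1) ^
                  (((Sε.card : ℝ) - 1)
                    + t * (Fintype.card 𝒳) * ((d : ℝ) - 1) * (d : ℝ) / 2
                    + ((d : ℝ) - 1) * (Fintype.card 𝒳) * t) *
                (1 + ε) ^ n *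
                (2 : ℝ) ^ ((n : ℝ) * t *
                  (Rhat - ⨅ Q : {Q : 𝒮 → ℝ // (∀ s, 0 ≤ Q s) ∧ (∀ s ∉ Sε, Q s = 0) ∧
                      ∑ s ∈ Sε, Q s = 1},
                    renyiI P (fun x => ∑ s ∈ Sε, Q.1 s • ρ x s) t))) ∧
        (∀ σ : Matrix (Fin n → Fin d) (Fin n → Fin d) ℂ, IsDensity σ →
          (Matrix.trace (T *
            cqState (fun xv : Fin n → 𝒳 => ∏ k, P (xv k)) (fun _ => σ))).re ≤
            (n : ℝ) ^ ((d : ℝ) * ((d : ℝ) - 1) / 2) * (numPartLe n d : ℝ) *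
              (2 : ℝ) ^ (-(n : ℝ) * Rhat)) := by
  obtain ⟨T, hT⟩ := exists_isUniversalTest 𝒳 hn d Rhat
  refine ⟨cqState 1 (symmetrize T),
    Matrix.nonneg_iff_posSemidef.mp (cqState_one_nonneg (symmetrize_nonneg hT.nonneg)),
    Matrix.nonneg_iff_posSemidef.mp ?_, fun P hP hP1 => ⟨?_, fun σ hσ => ?_⟩⟩
  · rw [one_sub_cqState]
    exact cqState_one_nonneg fun x => sub_nonneg.mpr (symmetrize_le_one hT.le_one x)
  · intro 𝒮 ρ hρ t ht ε hε Sε hSε sv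
    rw [one_sub_cqState, ← reTrace_apply, reTrace_cqState_one_mul]
    exact hT.sum_mul_reTrace_one_sub_symmetrize_mul_le_of_cover hn ⟨P, hP, hP1⟩ hρ ht
      (by positivity) hSε sv
  · rw [← reTrace_apply, reTrace_cqState_one_mul, ← Nat.cast_choose_two, Real.rpow_natCast]
    exact hT.sum_mul_reTrace_symmetrize_mul_le ⟨P, hP, hP1⟩ hσ

/-- Under Assumption A, for every `n ≥ 1` and `R̂ > 0` there is a universal
test `T_n`, `0 ⪯ T_n ⪯ I`, satisfying the two operational bounds (i) and (ii) for every
probability distribution `P` on `𝒳`, every `t ∈ (0,1)`, every `ε > 0`, and every finite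
`𝒮_ε ⊆ 𝒮` witnessing Assumption A at `ε`. -/
theorem statement3 {𝒳 𝒮 : Type*} [Fintype 𝒳] [DecidableEq 𝒳] [Nonempty 𝒮] {d : ℕ}
    (ρ : 𝒳 → 𝒮 → Matrix (Fin d) (Fin d) ℂ)
    (hρ : ∀ x s, IsDensity (ρ x s))
    (hAss : AssumptionA ρ)
    (n : ℕ) (hn : 1 ≤ n) (Rhat : ℝ) (hR : 0 < Rhat) :
    ∃ T : Matrix ((Fin n → 𝒳) × (Fin n → Fin d)) ((Fin n → 𝒳) × (Fin n → Fin d)) ℂ,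
      T.PosSemidef ∧ (1 - T).PosSemidef ∧
      ∀ P : 𝒳 → ℝ, (∀ x, 0 ≤ P x) → (∑ x, P x = 1) →
      ∀ t : ℝ, t ∈ Set.Ioo (0 : ℝ) 1 →
      ∀ ε : ℝ, 0 < ε →
      ∀ Sε : Finset 𝒮,
        (∀ s : 𝒮, ∃ s' ∈ Sε, ∀ x : 𝒳, Loewner (ρ x s) ((1 + ε) • ρ x s')) →
        (∀ sv : Fin n → 𝒮,
          (Matrix.trace ((1 - T) *
            cqState (fun xv : Fin n → 𝒳 => ∏ k, P (xv k))
              (fun xv => tensorFam fun k => ρ (xv k) (sv k)))).re ≤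
            ((n : ℝ) + 1) ^
                (((Sε.card : ℝ) - 1)
                  + t * (Fintype.card 𝒳) * ((d : ℝ) - 1) * (d : ℝ) / 2
                  + ((d : ℝ) - 1) * (Fintype.card 𝒳) * t) *
              (1 + ε) ^ n *
              (2 : ℝ) ^ ((n : ℝ) * t *
                (Rhat - ⨅ Q : {Q : 𝒮 → ℝ // (∀ s, 0 ≤ Q s) ∧ (∀ s ∉ Sε, Q s = 0) ∧
                    ∑ s ∈ Sε, Q s = 1},
                  renyiI P (fun x => ∑ s ∈ Sε, Q.1 s • ρ x s) t))) ∧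
        (∀ σ : Matrix (Fin n → Fin d) (Fin n → Fin d) ℂ, IsDensity σ →
          (Matrix.trace (T *
            cqState (fun xv : Fin n → 𝒳 => ∏ k, P (xv k)) (fun _ => σ))).re ≤
            (n : ℝ) ^ ((d : ℝ) * ((d : ℝ) - 1) / 2) * (numPartLe n d : ℝ) *
              (2 : ℝ) ^ (-(n : ℝ) * Rhat)) := by
  obtain ⟨T, hnonneg, hle, hT⟩ := statement3_general (𝒳 := 𝒳) d n hn Rhat
  exact ⟨T, hnonneg, hle, fun P hP hP1 t ht ε hε Sε hSε =>
    ⟨(hT P hP hP1).1 hρ t ht ε hε Sε hSε, (hT P hP hP1).2⟩⟩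
end
end

section
/- If for every x∈𝒳 the set D_x := {ρ_{x,s} : s∈𝒮} is a compact subset of the set of density matrices on H_B, and every ρ_{x,s} is positive definite (full rank), then the family {ρ_{x,s}} satisfies Assumption A. -/
open scoped ComplexOrder

noncomputable section

open Filter Set Topology

/-! Strict positivity is an open condition among self-adjoint elements, so near a strictly positive
`p` any two self-adjoint `a`, `b` satisfy `a ≤ (1 + ε) • b`, because `(1 + ε) • b - a` is close to
`ε • p`. Finitely many such neighbourhoods cover a compact set, and one member of the family from
each neighbourhood that contains any gives the finite set of indices. -/

theorem exists_finset_forall_exists_rel_of_isCompact {ι X : Type*} [TopologicalSpace X]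
    {K : Set X} (hK : IsCompact K) {R : X → X → Prop}
    (hR : ∀ p ∈ K, ∀ᶠ z in 𝓝 (p, p), R z.1 z.2) {f : ι → X} (hf : ∀ i, f i ∈ K) :
    ∃ F : Finset ι, ∀ i, ∃ j ∈ F, R (f i) (f j) := by
  have hsquare : ∀ p ∈ K, ∃ U ∈ 𝓝 p, ∀ u ∈ U, ∀ v ∈ U, R u v := fun p hp ↦
    eventually_prod_self_iff.1 (nhds_prod_eq (x := p) (y := p) ▸ hR p hp)
  choose! U hU hUR using hsquare
  obtain ⟨t, htK, hcover⟩ := hK.elim_nhds_subcover U hU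
  have hcentre : ∀ i, ∃ p : t, f i ∈ U p := fun i ↦ by simpa using hcover (hf i)
  choose c hc using hcentre
  let representative : range c → ι := rangeSplitting c
  refine ⟨(finite_range representative).toFinset, fun i ↦ ?_⟩
  let j : ι := representative ⟨c i, mem_range_self i⟩
  have hsame : c j = c i := apply_rangeSplitting c _
  have hj : f j ∈ U (c i) := hsame ▸ hc j
  exact ⟨j, by simp [j], hUR (c i) (htK _ (c i).2) _ (hc i) _ hj⟩

section CStarAlgebra

variable {A : Type*} [CStarAlgebra A] [PartialOrder A] [StarOrderedRing A]

theorem eventually_nonneg_of_isStrictlyPositive {a : A} (ha : IsStrictlyPositive a) :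
    ∀ᶠ b in 𝓝 a, IsSelfAdjoint b → 0 ≤ b := by
  nontriviality A
  obtain ⟨r, hr, hra⟩ : ∃ r > 0, algebraMap ℝ A r ≤ a :=
    (CFC.exists_pos_algebraMap_le_iff ha.isSelfAdjoint).2 fun _ hx ↦ ha.spectrum_pos hx
  filter_upwards [Metric.ball_mem_nhds a hr] with b hb hbsa
  have hnorm : ‖a - b‖ ≤ r := (mem_ball_iff_norm'.1 hb).le
  have hsub : a - b ≤ a := calc
    a - b ≤ algebraMap ℝ A ‖a - b‖ := (ha.isSelfAdjoint.sub hbsa).le_algebraMap_norm_self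
    _ ≤ algebraMap ℝ A r := algebraMap_mono A hnorm
    _ ≤ a := hra
  exact sub_le_self_iff a |>.1 hsub

theorem eventually_le_one_add_smul_of_isStrictlyPositive {p : A} (hp : IsStrictlyPositive p)
    {ε : ℝ} (hε : 0 < ε) :
    ∀ᶠ z in 𝓝 (p, p), IsSelfAdjoint z.1 → IsSelfAdjoint z.2 → z.1 ≤ (1 + ε) • z.2 := by
  have hgap : IsStrictlyPositive ((1 + ε) • p - p) := by
    rw [add_smul, one_smul, add_sub_cancel_left]
    exact hp.smul hε
  have hcont : Continuous fun z : A × A ↦ (1 + ε) • z.2 - z.1 := by fun_prop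
  filter_upwards [hcont.continuousAt.eventually (eventually_nonneg_of_isStrictlyPositive hgap)]
    with z hz h₁ h₂
  exact sub_nonneg.1 (hz (((IsSelfAdjoint.all _).smul h₂).sub h₁))

theorem statement4_general {𝒳 𝒮 : Type*} [Finite 𝒳] {a : 𝒳 → 𝒮 → A} {K : 𝒳 → Set A}
    (hK : ∀ x, IsCompact (K x)) (hpos : ∀ x, ∀ p ∈ K x, IsStrictlyPositive p)
    (ha : ∀ x s, a x s ∈ K x) {ε : ℝ} (hε : 0 < ε) :
    ∃ Sε : Finset 𝒮, ∀ s, ∃ s' ∈ Sε, ∀ x, a x s ≤ (1 + ε) • a x s' := by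
  have hsa : ∀ x s, IsSelfAdjoint (a x s) := fun x s ↦ (hpos x _ (ha x s)).isSelfAdjoint
  let Dominated (u v : 𝒳 → A) : Prop :=
    ∀ x, IsSelfAdjoint (u x) → IsSelfAdjoint (v x) → u x ≤ (1 + ε) • v x
  have hnear : ∀ p ∈ univ.pi K, ∀ᶠ z in 𝓝 (p, p), Dominated z.1 z.2 := by
    refine fun p hp ↦ eventually_all.2 fun x ↦ ?_
    have heval : Tendsto (fun z : (𝒳 → A) × (𝒳 → A) ↦ (z.1 x, z.2 x)) (𝓝 (p, p))
        (𝓝 (p x, p x)) := Continuous.tendsto (by fun_prop) (p, p)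
    exact heval.eventually
      (eventually_le_one_add_smul_of_isStrictlyPositive (hpos x _ (hp x trivial)) hε)
  obtain ⟨F, hF⟩ := exists_finset_forall_exists_rel_of_isCompact (isCompact_univ_pi hK) hnear
    (f := fun s x ↦ a x s) fun s x _ ↦ ha x s
  refine ⟨F, fun s ↦ ?_⟩
  obtain ⟨s', hs', hle⟩ := hF s
  exact ⟨s', hs', fun x ↦ hle x (hsa x s) (hsa x s')⟩

end CStarAlgebra

/-- If for each `x` the set `D_x = {ρ_{x,s} : s ∈ 𝒮}` is compact and every
`ρ_{x,s}` is positive definite (full rank), then the family satisfies Assumption A. -/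
theorem statement4 {𝒳 𝒮 : Type*} [Fintype 𝒳] [Nonempty 𝒮] {d : ℕ}
    (ρ : 𝒳 → 𝒮 → Matrix (Fin d) (Fin d) ℂ)
    (hρ : ∀ x s, IsDensity (ρ x s))
    (hcompact : ∀ x, IsCompact (Set.range fun s => ρ x s))
    (hposdef : ∀ x s, (ρ x s).PosDef) :
    AssumptionA ρ := by
  -- `≤` unfolds to `Loewner`, and the operator norm induces the entrywise topology definitionally.
  open scoped MatrixOrder Matrix.Norms.L2Operator in
  exact fun ε hε ↦ statement4_general hcompact
    (fun x ↦ forall_mem_range.2 fun s ↦ (hposdef x s).isStrictlyPositive)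
    (fun x s ↦ mem_range_self s) hε
end
end
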